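/- For any T ∈ (0,∞) and any (s₀,φ) ∈ W, problem (P) with initial data (s₀,φ) admits at most one solution (s,u) on (0,T]: if (s,u) and (σ,v) are both solutions of (P) on (0,T] with initial data (s₀,φ), then s = σ on [0,T] and u = v on ⋃_{t∈[0,T]} {t}×[0,s(t)]. -/

import Mathlib

open Set MeasureTheory Filter Topology Real
open scoped ENNReal

noncomputable section

/-- `(s₀, φ)` belongs to the class `W`: `s₀ ∈ (0,∞)`, `φ` is Lipschitz on `[0,s₀]`,
not identically zero, nonnegative there, and vanishes at `s₀`. -/
def memW (s₀ : ℝ) (φ : ℝ → ℝ) : Prop :=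
  0 < s₀ ∧ (∃ K : NNReal, LipschitzOnWith K φ (Icc 0 s₀)) ∧
    (∃ x ∈ Icc 0 s₀, φ x ≠ 0) ∧ (∀ x ∈ Icc 0 s₀, 0 ≤ φ x) ∧ φ s₀ = 0

/-- `(s,u)` is a solution of the one-phase Stefan problem (P) on `(0,T]` (finite `T`)
with exponent `p` and initial data `(s₀,φ)`. -/
structure IsSolOn (p s₀ : ℝ) (φ : ℝ → ℝ) (T : ℝ) (s : ℝ → ℝ) (u : ℝ → ℝ → ℝ) : Prop where
  T_pos : 0 < T
  s_cont : ContinuousOn s (Icc 0 T)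
  s_diff : ∀ t ∈ Ioc 0 T, DifferentiableAt ℝ s t
  s_deriv_cont : ContinuousOn (deriv s) (Ioc 0 T)
  s_pos : ∀ t ∈ Icc 0 T, 0 < s t
  ut_diff : ∀ t ∈ Ioc 0 T, ∀ x ∈ Ioo 0 (s t), DifferentiableAt ℝ (fun τ => u τ x) t
  ux_diff : ∀ t ∈ Ioc 0 T, ∀ x ∈ Ioo 0 (s t), DifferentiableAt ℝ (u t) x
  uxx_diff : ∀ t ∈ Ioc 0 T, ∀ x ∈ Ioo 0 (s t), DifferentiableAt ℝ (deriv (u t)) x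
  ut_cont : ContinuousOn (fun q : ℝ × ℝ => deriv (fun τ => u τ q.2) q.1)
      {q : ℝ × ℝ | q.1 ∈ Ioc 0 T ∧ q.2 ∈ Ioo 0 (s q.1)}
  uxx_cont : ContinuousOn (fun q : ℝ × ℝ => deriv (deriv (u q.1)) q.2)
      {q : ℝ × ℝ | q.1 ∈ Ioc 0 T ∧ q.2 ∈ Ioo 0 (s q.1)}
  ux_cont : ContinuousOn (fun q : ℝ × ℝ => deriv (u q.1) q.2)
      {q : ℝ × ℝ | q.1 ∈ Ioc 0 T ∧ q.2 ∈ Icc 0 (s q.1)}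
  u_cont : ContinuousOn (fun q : ℝ × ℝ => u q.1 q.2)
      {q : ℝ × ℝ | q.1 ∈ Icc 0 T ∧ q.2 ∈ Icc 0 (s q.1)}
  u_nonneg : ∀ t ∈ Icc 0 T, ∀ x ∈ Icc 0 (s t), 0 ≤ u t x
  heat : ∀ t ∈ Ioc 0 T, ∀ x ∈ Ioo 0 (s t),
      deriv (fun τ => u τ x) t = deriv (deriv (u t)) x
  bc_zero : ∀ t ∈ Ioc 0 T, -deriv (u t) 0 = u t 0 ^ p
  bc_free : ∀ t ∈ Ioc 0 T, u t (s t) = 0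
  stefan : ∀ t ∈ Ioc 0 T, deriv s t = -deriv (u t) (s t)
  init : ∀ x ∈ Icc 0 s₀, u 0 x = φ x
  init_s : s 0 = s₀

/-- `(s,u)` is a global-in-time solution of problem (P). -/
def IsGlobalSol (p s₀ : ℝ) (φ : ℝ → ℝ) (s : ℝ → ℝ) (u : ℝ → ℝ → ℝ) : Prop :=
  ∀ T : ℝ, 0 < T → IsSolOn p s₀ φ T s u

/-- `Tm ∈ (0,∞]` is the maximal existence time of the solution `(s,u)` of (P) with
initial data `(s₀,φ)`: the solution exists on `(0,T]` for every `T < Tm`, and for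
`T > Tm` problem (P) admits no solution on `(0,T]`. -/
def IsMaxSol (p s₀ : ℝ) (φ : ℝ → ℝ) (Tm : ℝ≥0∞) (s : ℝ → ℝ) (u : ℝ → ℝ → ℝ) : Prop :=
  0 < Tm ∧
    (∀ T : ℝ, 0 < T → ENNReal.ofReal T < Tm → IsSolOn p s₀ φ T s u) ∧
    (∀ T : ℝ, Tm < ENNReal.ofReal T → ¬∃ σ v, IsSolOn p s₀ φ T σ v)

/-- The sup norm `‖u(t)‖_{L^∞(0,s(t))}`. -/
def supNorm (s : ℝ → ℝ) (u : ℝ → ℝ → ℝ) (t : ℝ) : ℝ :=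
  sSup (u t '' Ioo 0 (s t))

/-- The `L¹` norm `‖u(t)‖_{L¹(0,s(t))}` of the nonnegative function `u(t,·)`. -/
def L1Norm (s : ℝ → ℝ) (u : ℝ → ℝ → ℝ) (t : ℝ) : ℝ :=
  ∫ x in (0:ℝ)..(s t), u t x

/-- The energy `E(s(t),u(t))`. -/
def energy (p : ℝ) (s : ℝ → ℝ) (u : ℝ → ℝ → ℝ) (t : ℝ) : ℝ :=
  1 / 2 * (∫ x in (0:ℝ)..(s t), (deriv (u t) x) ^ 2) - u t 0 ^ (p + 1) / (p + 1)



lemma ext_cont {s : ℝ → ℝ} {f : ℝ → ℝ → ℝ} {t1 T : ℝ} (ht : t1 ≤ T)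
    (hs : ContinuousOn s (Icc t1 T)) (hpos : ∀ t ∈ Icc t1 T, 0 ≤ s t)
    (hf : ContinuousOn (fun q : ℝ × ℝ => f q.1 q.2)
      {q : ℝ × ℝ | q.1 ∈ Icc t1 T ∧ q.2 ∈ Icc 0 (s q.1)}) :
    ∃ U : ℝ → ℝ → ℝ, Continuous (Function.uncurry U) ∧
      ∀ t ∈ Icc t1 T, ∀ x ∈ Icc 0 (s t), U t x = f t x := by
  have hc : Continuous fun t : ℝ => max t1 (min t T) := by fun_prop
  have hcm : ∀ t : ℝ, max t1 (min t T) ∈ Icc t1 T := fun t =>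
    ⟨le_max_left _ _, max_le ht (min_le_right _ _)⟩
  have hS : Continuous fun t : ℝ => s (max t1 (min t T)) :=
    hs.comp_continuous hc hcm
  refine ⟨fun t x => f (max t1 (min t T)) (max 0 (min x (s (max t1 (min t T))))), ?_, ?_⟩
  · have : Continuous fun q : ℝ × ℝ => ((max t1 (min q.1 T),
        max 0 (min q.2 (s (max t1 (min q.1 T))))) : ℝ × ℝ) := by
      have h2 : Continuous fun q : ℝ × ℝ => s (max t1 (min q.1 T)) :=
        hS.comp continuous_fst
      exact Continuous.prodMk (by fun_prop) (continuous_const.max (continuous_snd.min h2))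
    exact hf.comp_continuous this fun q =>
      ⟨hcm _, le_max_left _ _, max_le (hpos _ (hcm _)) (min_le_right _ _)⟩
  · intro t htm x hx
    have e : max t1 (min t T) = t := by rw [min_eq_left htm.2, max_eq_right htm.1]
    simp only [e]
    rw [min_eq_left hx.2, max_eq_right hx.1]

/-- left Dini derivative lemma -/
lemma dini_le {F : ℝ → ℝ} {a b c : ℝ} (hab : a < b) (hF : ContinuousOn F (Icc a b))
    (h : ∀ t ∈ Ioo a b, ∀ c' > c, ∃ᶠ t' in 𝓝[<] t, F t - F t' ≤ c' * (t - t')) :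
    F b - F a ≤ c * (b - a) := by
  by_contra hcon
  push Not at hcon
  obtain ⟨c', hc', hc2⟩ : ∃ c' > c, c' * (b - a) < F b - F a := by
    refine ⟨c + (F b - F a - c * (b - a)) / (2 * (b - a)), ?_, ?_⟩
    · have : 0 < (F b - F a - c * (b - a)) / (2 * (b - a)) := by
        apply div_pos <;> linarith
      linarith
    · have : b - a ≠ 0 := by linarith
      have e : (c + (F b - F a - c * (b - a)) / (2 * (b - a))) * (b - a) =
        c * (b - a) + (F b - F a - c * (b - a)) / 2 := by field_simp
      rw [e]; linarith
  set G : ℝ → ℝ := fun t => F t - c' * t with hG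
  have hGc : ContinuousOn G (Icc a b) := by
    apply hF.sub; fun_prop
  have hGab : G a < G b := by simp only [hG]; linarith
  set m := (G a + G b) / 2 with hm
  have hcl : IsClosed {t ∈ Icc a b | m ≤ G t} :=
    hGc.preimage_isClosed_of_isClosed isClosed_Icc isClosed_Ici
  have hcomp : IsCompact {t ∈ Icc a b | m ≤ G t} :=
    isCompact_Icc.of_isClosed_subset hcl (fun x hx => hx.1)
  obtain ⟨t0, ht0, hmin⟩ := hcomp.exists_isLeast ⟨b, ⟨hab.le, le_rfl⟩, by linarith⟩
  have hlt : ∀ t ∈ Icc a b, t < t0 → G t < m := by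
    intro t ht htt
    by_contra hh
    push Not at hh
    exact absurd (hmin ⟨ht, hh⟩) (not_le.2 htt)
  have ht0a : a < t0 := by
    rcases eq_or_lt_of_le ht0.1.1 with h' | h'
    · have := ht0.2
      rw [← h'] at this
      linarith
    · exact h'
  have ht0b : t0 < b := by
    rcases eq_or_lt_of_le ht0.1.2 with h' | h'
    · exfalso
      have hcb : Tendsto G (𝓝[<] b) (𝓝 (G b)) := by
        have := (hGc b ⟨hab.le, le_rfl⟩)
        exact this.mono_left (nhdsWithin_le_of_mem (Icc_mem_nhdsLT hab))
      have h1 : ∀ᶠ t in 𝓝[<] b, m < G t := hcb.eventually (lt_mem_nhds (by linarith))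
      have h2 : ∀ᶠ t in 𝓝[<] b, t ∈ Ioo a b := Ioo_mem_nhdsLT hab
      obtain ⟨t, h3, h4⟩ := (h1.and h2).exists
      have := hlt t ⟨h4.1.le, h4.2.le⟩ (by linarith [h4.2])
      linarith
    · exact h'
  have hfr := h t0 ⟨ht0a, ht0b⟩ c' hc'
  have h2 : ∀ᶠ t in 𝓝[<] t0, t ∈ Ioo a t0 := Ioo_mem_nhdsLT ht0a
  obtain ⟨t, h3, h4⟩ := (hfr.and_eventually h2).exists
  have h5 := hlt t ⟨h4.1.le, by linarith [h4.2]⟩ h4.2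
  have h6 := ht0.2
  simp only [hG] at h5 h6
  nlinarith

/-- Gronwall with left Dini derivative -/
lemma dini_gronwall {F : ℝ → ℝ} {T K : ℝ} (hK : 0 ≤ K) (hF : ContinuousOn F (Icc 0 T))
    (h0 : F 0 = 0) (hnn : ∀ t ∈ Icc 0 T, 0 ≤ F t)
    (h : ∀ t ∈ Ioo 0 T, ∀ ε > 0, ∃ᶠ t' in 𝓝[<] t, F t - F t' ≤ (K * F t + ε) * (t - t')) :
    ∀ t ∈ Icc 0 T, F t = 0 := by
  -- step claim
  have step : ∀ a b, 0 ≤ a → a < b → b ≤ T → F a = 0 → K * (b - a) < 1 →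
      ∀ t ∈ Icc a b, F t = 0 := by
    intro a b ha hab hb hFa hKab
    have hsub : Icc a b ⊆ Icc 0 T := Icc_subset_Icc ha hb
    obtain ⟨tm, htm, hmax⟩ := isCompact_Icc.exists_isMaxOn ⟨a, le_rfl, hab.le⟩ (hF.mono hsub)
    have hle : F tm ≤ 0 := by
      by_contra hpos
      push Not at hpos
      have hatm : a < tm := by
        rcases eq_or_lt_of_le htm.1 with h' | h'
        · rw [← h', hFa] at hpos; exact absurd hpos (lt_irrefl _)
        · exact h'
      have := dini_le (c := K * F tm) hatm (hF.mono (Icc_subset_Icc ha (htm.2.trans hb))) (by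
        intro t ht c' hc'
        refine (h t ⟨by linarith [ht.1], by linarith [ht.2, htm.2]⟩ (c' - K * F tm)
          (by linarith)).mp ?_
        filter_upwards [self_mem_nhdsWithin] with t' ht' hh
        have h1 : F t ≤ F tm := hmax ⟨ht.1.le, by linarith [ht.2, htm.2]⟩
        have h2 : K * F t ≤ K * F tm := mul_le_mul_of_nonneg_left h1 hK
        have h3 : 0 < t - t' := sub_pos.2 ht'
        refine hh.trans (mul_le_mul_of_nonneg_right (by linarith) h3.le))
      rw [hFa] at this
      have h5 : K * (tm - a) ≤ K * (b - a) :=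
        mul_le_mul_of_nonneg_left (by linarith [htm.2]) hK
      nlinarith
    intro t ht
    exact le_antisymm ((hmax ht).trans hle) (hnn t (hsub ht))
  -- the zero set
  intro t ht
  obtain ⟨n, hn⟩ := exists_nat_gt (K * T)
  have key : ∀ k : ℕ, k ≤ n + 1 → ∀ τ ∈ Icc 0 (T * k / (n + 1)), F τ = 0 := by
    intro k
    induction k with
    | zero =>
      intro _ τ hτ
      simp only [Nat.cast_zero, mul_zero, zero_div] at hτ
      have : τ = 0 := le_antisymm hτ.2 hτ.1
      rw [this, h0]
    | succ k ih =>
      intro hk τ hτ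
      have hT0 : 0 ≤ T := ht.1.trans ht.2
      have hn1 : (0:ℝ) < n + 1 := by positivity
      have hk' : ((k:ℝ) + 1) ≤ n + 1 := by exact_mod_cast hk
      by_cases hc : τ ≤ T * k / (n + 1)
      · exact ih (by omega) τ ⟨hτ.1, hc⟩
      · push Not at hc
        have hτ2 := hτ.2
        push_cast at hτ2
        have e1 : T * (k + 1) / (n + 1) = T * k / (n + 1) + T / (n + 1) := by field_simp
        have hA0 : 0 ≤ T * k / (n + 1) := by positivity
        refine step (T * k / (n + 1)) (T * (k + 1) / (n + 1)) hA0
          (hc.trans_le hτ2) ?_ (ih (by omega) _ ⟨hA0, le_rfl⟩) ?_ τ ⟨hc.le, hτ2⟩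
        · rw [div_le_iff₀ hn1]; exact mul_le_mul_of_nonneg_left hk' hT0
        · rw [e1, add_sub_cancel_left, ← mul_div_assoc, div_lt_one hn1]; linarith
  have hn1 : (0:ℝ) < n + 1 := by positivity
  refine key (n + 1) le_rfl t ?_
  push_cast
  rw [mul_div_assoc, div_self hn1.ne', mul_one]
  exact ht

lemma avg_tendsto {k : ℝ → ℝ → ℝ} {t0 : ℝ} (hc : ContinuousAt (Function.uncurry k) (t0, t0))
    (hi : ∀ᶠ t in 𝓝[<] t0, IntervalIntegrable (k t) volume t t0) :
    Tendsto (fun t => (∫ τ in t..t0, k t τ) / (t0 - t)) (𝓝[<] t0) (𝓝 (k t0 t0)) := by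
  rw [Metric.tendsto_nhds]
  intro ε hε
  obtain ⟨d, hd, hball⟩ := Metric.continuousAt_iff.1 hc (ε / 2) (by linarith)
  have h2 : ∀ᶠ t in 𝓝[<] t0, t ∈ Ioo (t0 - d) t0 := Ioo_mem_nhdsLT (by linarith)
  filter_upwards [h2, hi] with t ht hit
  have hpos : 0 < t0 - t := by linarith [ht.2]
  have hb : ‖∫ τ in t..t0, (k t τ - k t0 t0)‖ ≤ ε / 2 * |t0 - t| := by
    apply intervalIntegral.norm_integral_le_of_norm_le_const
    intro τ hτ
    rw [uIoc_of_le ht.2.le] at hτ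
    have := @hball (t, τ) (by
      rw [Prod.dist_eq, max_lt_iff]
      simp only [Real.dist_eq]
      constructor <;> rw [abs_lt] <;> constructor <;> linarith [ht.1, ht.2, hτ.1, hτ.2])
    rw [Real.dist_eq] at this
    exact this.le
  rw [intervalIntegral.integral_sub hit (by simp), intervalIntegral.integral_const,
    abs_of_pos hpos, smul_eq_mul, Real.norm_eq_abs] at hb
  rw [Real.dist_eq]
  have : (∫ τ in t..t0, k t τ) / (t0 - t) - k t0 t0 =
      ((∫ τ in t..t0, k t τ) - (t0 - t) * k t0 t0) / (t0 - t) := by field_simp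
  rw [this, abs_div, abs_of_pos hpos, div_lt_iff₀ hpos]
  nlinarith


section sol
variable {p s₀ T : ℝ} {φ s : ℝ → ℝ} {u : ℝ → ℝ → ℝ}

lemma sol_ut_cont_x (h : IsSolOn p s₀ φ T s u) {t : ℝ} (ht : t ∈ Icc 0 T) :
    ContinuousOn (u t) (Icc 0 (s t)) := by
  have : ContinuousOn (fun x : ℝ => ((t, x) : ℝ × ℝ)) (Icc 0 (s t)) := by fun_prop
  exact h.u_cont.comp this fun x hx => ⟨ht, hx⟩

lemma sol_ux_cont_x (h : IsSolOn p s₀ φ T s u) {t : ℝ} (ht : t ∈ Ioc 0 T) :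
    ContinuousOn (deriv (u t)) (Icc 0 (s t)) := by
  have : ContinuousOn (fun x : ℝ => ((t, x) : ℝ × ℝ)) (Icc 0 (s t)) := by fun_prop
  exact h.ux_cont.comp this fun x hx => ⟨ht, hx⟩

lemma sol_ux_nonpos (h : IsSolOn p s₀ φ T s u) {t : ℝ} (ht : t ∈ Ioc 0 T) :
    deriv (u t) (s t) ≤ 0 := by
  by_contra hcon
  push Not at hcon
  have ht' : t ∈ Icc 0 T := ⟨ht.1.le, ht.2⟩
  have hs := h.s_pos t ht'
  have hc := sol_ux_cont_x h ht (s t) ⟨hs.le, le_rfl⟩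
  have h1 : ∀ᶠ x in 𝓝[<] (s t), 0 < deriv (u t) x :=
    (hc.mono_left (nhdsWithin_le_of_mem (Icc_mem_nhdsLT hs))).eventually (lt_mem_nhds hcon)
  have h2 : ∀ᶠ x in 𝓝[<] (s t), x ∈ Ioo 0 (s t) := Ioo_mem_nhdsLT hs
  obtain ⟨y, hy, hy2⟩ := (mem_nhdsLT_iff_exists_Ioo_subset).1 (h1.and h2)
  set z := (y + s t) / 2 with hz
  have hy' : y < s t := hy
  have hz1 : z ∈ Ioo y (s t) := ⟨by rw [hz]; linarith, by rw [hz]; linarith⟩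
  have hz2 := (hy2 hz1).2
  have hmono : StrictMonoOn (u t) (Icc z (s t)) := by
    apply strictMonoOn_of_deriv_pos (convex_Icc _ _)
      ((sol_ut_cont_x h ht').mono (Icc_subset_Icc hz2.1.le le_rfl))
    intro x hx
    rw [interior_Icc] at hx
    exact (hy2 ⟨hz1.1.trans hx.1, hx.2⟩).1
  have := hmono ⟨le_rfl, hz2.2.le⟩ ⟨hz2.2.le, le_rfl⟩ hz2.2
  rw [h.bc_free t ht] at this
  exact absurd (h.u_nonneg t ht' z ⟨hz2.1.le, hz2.2.le⟩) (not_le.2 this)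

lemma sol_mono (h : IsSolOn p s₀ φ T s u) : MonotoneOn s (Icc 0 T) := by
  apply monotoneOn_of_deriv_nonneg (convex_Icc _ _) h.s_cont
  · intro t ht
    rw [interior_Icc] at ht
    exact (h.s_diff t ⟨ht.1, ht.2.le⟩).differentiableWithinAt
  · intro t ht
    rw [interior_Icc] at ht
    rw [h.stefan t ⟨ht.1, ht.2.le⟩]
    linarith [sol_ux_nonpos h ⟨ht.1, ht.2.le⟩]

lemma sol_ext_u (h : IsSolOn p s₀ φ T s u) :
    ∃ U : ℝ → ℝ → ℝ, Continuous (Function.uncurry U) ∧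
      ∀ t ∈ Icc 0 T, ∀ x ∈ Icc 0 (s t), U t x = u t x :=
  ext_cont h.T_pos.le h.s_cont (fun t ht => (h.s_pos t ht).le) h.u_cont

lemma sol_ext_ux (h : IsSolOn p s₀ φ T s u) {t1 : ℝ} (ht1 : 0 < t1) (ht1T : t1 ≤ T) :
    ∃ U : ℝ → ℝ → ℝ, Continuous (Function.uncurry U) ∧
      ∀ t ∈ Icc t1 T, ∀ x ∈ Icc 0 (s t), U t x = deriv (u t) x := by
  have hsub : Icc t1 T ⊆ Ioc 0 T := fun t ht => ⟨ht1.trans_le ht.1, ht.2⟩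
  refine ext_cont (f := fun t x => deriv (u t) x) ht1T
    (h.s_cont.mono (hsub.trans Ioc_subset_Icc_self))
    (fun t ht => (h.s_pos t (Ioc_subset_Icc_self (hsub ht))).le) (h.ux_cont.mono ?_)
  intro q hq
  exact ⟨hsub hq.1, hq.2⟩

/-- the time average of the flux is a primitive of the increment -/
lemma sol_flux (h : IsSolOn p s₀ φ T s u) {t1 t t0 : ℝ} (ht1 : 0 < t1) (h1t : t1 ≤ t)
    (htt : t < t0) (ht0 : t0 ≤ T) {P : ℝ → ℝ → ℝ} (hP : Continuous (Function.uncurry P))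
    (hPe : ∀ t ∈ Icc t1 T, ∀ x ∈ Icc 0 (s t), P t x = deriv (u t) x) {x : ℝ}
    (hx : x ∈ Ioo 0 (s t)) :
    HasDerivAt (fun x => ∫ τ in t..t0, P τ x) (u t0 x - u t x) x := by
  have hIcc : Icc t t0 ⊆ Ioc 0 T := fun τ hτ => ⟨by linarith [hτ.1], by linarith [hτ.2]⟩
  have hmono := sol_mono h
  have hdom : ∀ τ ∈ Icc t t0, s t ≤ s τ := fun τ hτ =>
    hmono (Ioc_subset_Icc_self (hIcc ⟨le_rfl, htt.le⟩)) (Ioc_subset_Icc_self (hIcc hτ)) hτ.1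
  set y1 := x / 2 with hy1
  set y2 := (x + s t) / 2 with hy2
  have hx1 : 0 < x := hx.1
  have hx2 : x < s t := hx.2
  have hsub : ∀ τ ∈ Icc t t0, ∀ y ∈ Icc y1 y2, y ∈ Ioo 0 (s τ) := by
    intro τ hτ y hy
    have := hdom τ hτ
    exact ⟨by linarith [hy.1], by linarith [hy.2]⟩
  have hcK : IsCompact (Icc t t0 ×ˢ Icc y1 y2) := isCompact_Icc.prod isCompact_Icc
  have hcc : ContinuousOn (fun q : ℝ × ℝ => deriv (deriv (u q.1)) q.2)
      (Icc t t0 ×ˢ Icc y1 y2) :=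
    h.uxx_cont.mono fun q hq => ⟨hIcc hq.1, hsub q.1 hq.1 q.2 hq.2⟩
  obtain ⟨C, hC⟩ := hcK.exists_bound_of_continuousOn hcc
  have hxm : x ∈ Icc y1 y2 := ⟨by linarith, by linarith⟩
  have hcx : ContinuousOn (fun τ => deriv (deriv (u τ)) x) (Icc t t0) := by
    have : ContinuousOn (fun τ : ℝ => ((τ, x) : ℝ × ℝ)) (Icc t t0) := by fun_prop
    exact hcc.comp this fun τ hτ => ⟨hτ, hxm⟩
  have hder := (intervalIntegral.hasDerivAt_integral_of_dominated_loc_of_deriv_le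
    (μ := volume) (a := t) (b := t0) (F := fun x τ => P τ x)
    (F' := fun x τ => deriv (deriv (u τ)) x) (x₀ := x) (s := Ioo y1 y2) (bound := fun _ => C)
    (Ioo_mem_nhds (by linarith) (by linarith))
    (Eventually.of_forall fun y => by
      have : Continuous fun τ => P τ y := hP.comp (Continuous.prodMk continuous_id continuous_const)
      exact this.aestronglyMeasurable)
    (by
      have : Continuous fun τ => P τ x := hP.comp (Continuous.prodMk continuous_id continuous_const)
      exact this.intervalIntegrable _ _)
    (by
      rw [uIoc_of_le htt.le]
      exact (hcx.mono Ioc_subset_Icc_self).aestronglyMeasurable measurableSet_Ioc)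
    (Eventually.of_forall fun τ hτ y hy => by
      rw [uIoc_of_le htt.le] at hτ
      exact hC (τ, y) ⟨Ioc_subset_Icc_self hτ, Ioo_subset_Icc_self hy⟩)
    (by simp)
    (Eventually.of_forall fun τ hτ y hy => by
      rw [uIoc_of_le htt.le] at hτ
      have hτ' := Ioc_subset_Icc_self hτ
      have hyy := hsub τ hτ' y (Ioo_subset_Icc_self hy)
      have hd := (h.uxx_diff τ (hIcc hτ') y hyy).hasDerivAt
      refine hd.congr_of_eventuallyEq ?_
      filter_upwards [Ioo_mem_nhds hyy.1 hyy.2] with z hz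
      exact hPe τ ⟨by linarith [hτ.1], by linarith [hτ.2]⟩ z (Ioo_subset_Icc_self hz))).2
  suffices hval : ∫ τ in t..t0, deriv (deriv (u τ)) x = u t0 x - u t x by
    rw [← hval]; exact hder
  have e : ∫ τ in t..t0, deriv (deriv (u τ)) x = ∫ τ in t..t0, deriv (fun τ' => u τ' x) τ := by
    apply intervalIntegral.integral_congr
    intro τ hτ
    rw [uIcc_of_le htt.le] at hτ
    exact (h.heat τ (hIcc hτ) x (hsub τ hτ x hxm)).symm
  rw [e]
  have hct : ContinuousOn (fun τ => deriv (fun τ' => u τ' x) τ) (Icc t t0) := by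
    refine hcx.congr ?_
    intro τ hτ
    exact h.heat τ (hIcc hτ) x (hsub τ hτ x hxm)
  apply intervalIntegral.integral_eq_sub_of_hasDerivAt (f := fun τ => u τ x)
  · intro τ hτ
    rw [uIcc_of_le htt.le] at hτ
    exact (h.ut_diff τ (hIcc hτ) x (hsub τ hτ x hxm)).hasDerivAt
  · apply ContinuousOn.intervalIntegrable
    rw [uIcc_of_le htt.le]
    exact hct

lemma sol_rect (h : IsSolOn p s₀ φ T s u) {t1 t t0 : ℝ} (ht1 : 0 < t1) (h1t : t1 ≤ t)
    (htt : t < t0) (ht0 : t0 ≤ T) {P U : ℝ → ℝ → ℝ} (hP : Continuous (Function.uncurry P))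
    (hPe : ∀ t ∈ Icc t1 T, ∀ x ∈ Icc 0 (s t), P t x = deriv (u t) x)
    (hU : Continuous (Function.uncurry U))
    (hUe : ∀ t ∈ Icc 0 T, ∀ x ∈ Icc 0 (s t), U t x = u t x) {y : ℝ}
    (hy : y ∈ Icc 0 (s t)) {η η' : ℝ → ℝ} (hη : Continuous η) (hη' : Continuous η')
    (hd : ∀ x ∈ Ioo 0 y, HasDerivAt η (η' x) x) :
    ∫ x in (0:ℝ)..y, η x * (U t0 x - U t x) =
      ∫ τ in t..t0, (η y * P τ y - η 0 * P τ 0 - ∫ x in (0:ℝ)..y, η' x * P τ x) := by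
  have hUt : ∀ t, Continuous (U t) := fun t =>
    hU.comp (Continuous.prodMk continuous_const continuous_id)
  have hPx : ∀ x, Continuous fun τ => P τ x := fun x =>
    hP.comp (Continuous.prodMk continuous_id continuous_const)
  have hst : s t ≤ s t0 := sol_mono h ⟨by linarith, by linarith⟩ ⟨by linarith, ht0⟩ htt.le
  have hQ : Continuous fun x => ∫ τ in t..t0, P τ x := by
    apply intervalIntegral.continuous_parametric_intervalIntegral_of_continuous'
    exact hP.comp continuous_swap
  have hparts := intervalIntegral.integral_mul_deriv_eq_deriv_mul_of_hasDerivAt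
    (a := 0) (b := y) (u := η) (u' := η') (v := fun x => ∫ τ in t..t0, P τ x)
    (v' := fun x => U t0 x - U t x) hη.continuousOn hQ.continuousOn
    (by
      rw [min_eq_left hy.1, max_eq_right hy.1]
      exact hd)
    (by
      rw [min_eq_left hy.1, max_eq_right hy.1]
      intro x hx
      have hx' : x ∈ Icc 0 (s t) := ⟨hx.1.le, hx.2.le.trans hy.2⟩
      rw [hUe t0 ⟨by linarith, ht0⟩ x ⟨hx'.1, hx'.2.trans hst⟩,
        hUe t ⟨by linarith, by linarith⟩ x hx']
      exact sol_flux h ht1 h1t htt ht0 hP hPe ⟨hx.1, hx.2.trans_le hy.2⟩)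
    (hη'.intervalIntegrable _ _)
    (((hUt t0).sub (hUt t)).intervalIntegrable _ _)
  rw [hparts]
  have hc3 : Continuous (Function.uncurry fun τ x => η' x * P τ x) := by
    have : Continuous fun q : ℝ × ℝ => η' q.2 := hη'.comp continuous_snd
    exact this.mul hP
  have hc4 : Continuous fun τ => ∫ x in (0:ℝ)..y, η' x * P τ x :=
    intervalIntegral.continuous_parametric_intervalIntegral_of_continuous' hc3 _ _
  have hswap : ∫ x in (0:ℝ)..y, η' x * ∫ τ in t..t0, P τ x =
      ∫ τ in t..t0, ∫ x in (0:ℝ)..y, η' x * P τ x := by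
    rw [← intervalIntegral_intervalIntegral_swap]
    · apply intervalIntegral.integral_congr
      intro x _
      simp only
      rw [intervalIntegral.integral_const_mul]
    · have : Continuous (Function.uncurry fun x τ => η' x * P τ x) := hc3.comp continuous_swap
      refine (this.continuousOn.integrableOn_compact
        (isCompact_uIcc.prod isCompact_uIcc)).mono_set
        (prod_mono uIoc_subset_uIcc uIoc_subset_uIcc)
  rw [hswap, intervalIntegral.integral_sub, intervalIntegral.integral_sub,
    intervalIntegral.integral_const_mul, intervalIntegral.integral_const_mul]
  · exact ((hPx y).const_mul _).intervalIntegrable _ _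
  · exact ((hPx 0).const_mul _).intervalIntegrable _ _
  · exact (((hPx y).const_mul _).sub ((hPx 0).const_mul _)).intervalIntegrable _ _
  · exact hc4.intervalIntegrable _ _

end sol


def Jd (δ z : ℝ) : ℝ := √(z ^ 2 + δ ^ 2) - δ
def gd (δ z : ℝ) : ℝ := z / √(z ^ 2 + δ ^ 2)
def gd' (δ z : ℝ) : ℝ := δ ^ 2 / (√(z ^ 2 + δ ^ 2)) ^ 3

lemma Jd_cont (δ : ℝ) : Continuous (Jd δ) := by unfold Jd; fun_prop

lemma rt_pos {δ : ℝ} (hδ : 0 < δ) (z : ℝ) : 0 < √(z ^ 2 + δ ^ 2) :=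
  Real.sqrt_pos.2 (by positivity)

lemma gd_cont {δ : ℝ} (hδ : 0 < δ) : Continuous (gd δ) := by
  unfold gd
  exact continuous_id.div (by fun_prop) fun z => (rt_pos hδ z).ne'

lemma gd'_cont {δ : ℝ} (hδ : 0 < δ) : Continuous (gd' δ) := by
  unfold gd'
  exact continuous_const.div (by fun_prop) fun z => (pow_pos (rt_pos hδ z) 3).ne'

lemma gd'_nonneg (δ z : ℝ) : 0 ≤ gd' δ z := by unfold gd'; positivity

lemma rt_hasDeriv {δ : ℝ} (hδ : 0 < δ) (z : ℝ) :
    HasDerivAt (fun z => √(z ^ 2 + δ ^ 2)) (gd δ z) z := by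
  have h1 : HasDerivAt (fun z : ℝ => z ^ 2 + δ ^ 2) (2 * z) z := by
    simpa using (hasDerivAt_pow 2 z).add_const (δ ^ 2)
  have h2 := h1.sqrt (by positivity : z ^ 2 + δ ^ 2 ≠ 0)
  have : gd δ z = 2 * z / (2 * √(z ^ 2 + δ ^ 2)) := by
    unfold gd
    rw [mul_div_mul_left _ _ two_ne_zero]
  rw [this]; exact h2

lemma Jd_hasDeriv {δ : ℝ} (hδ : 0 < δ) (z : ℝ) : HasDerivAt (Jd δ) (gd δ z) z :=
  (rt_hasDeriv hδ z).sub_const δ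

lemma gd_hasDeriv {δ : ℝ} (hδ : 0 < δ) (z : ℝ) : HasDerivAt (gd δ) (gd' δ z) z := by
  have hp := rt_pos hδ z
  have h := (hasDerivAt_id z).div (rt_hasDeriv hδ z) hp.ne'
  have e : gd' δ z = (1 * √(z ^ 2 + δ ^ 2) - id z * gd δ z) / √(z ^ 2 + δ ^ 2) ^ 2 := by
    unfold gd' gd
    have hsq : √(z ^ 2 + δ ^ 2) ^ 2 = z ^ 2 + δ ^ 2 := Real.sq_sqrt (by positivity)
    simp only [id]
    set r := √(z ^ 2 + δ ^ 2)
    field_simp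
    linarith
  rw [e]; exact h

lemma abs_le_rt (δ z : ℝ) : |z| ≤ √(z ^ 2 + δ ^ 2) :=
  Real.abs_le_sqrt (by nlinarith [sq_nonneg δ])

lemma gd_abs_le {δ : ℝ} (hδ : 0 < δ) (z : ℝ) : |gd δ z| ≤ 1 := by
  unfold gd
  rw [abs_div, abs_of_pos (rt_pos hδ z), div_le_one (rt_pos hδ z)]
  exact abs_le_rt δ z

lemma gd_neg (δ z : ℝ) : gd δ (-z) = - gd δ z := by
  unfold gd; rw [neg_sq, neg_div]

lemma Jd_neg (δ z : ℝ) : Jd δ (-z) = Jd δ z := by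
  unfold Jd; rw [neg_sq]

lemma Jd_lower (δ z : ℝ) : |z| - δ ≤ Jd δ z := by
  unfold Jd; linarith [abs_le_rt δ z]

lemma Jd_upper {δ : ℝ} (hδ : 0 ≤ δ) (z : ℝ) : Jd δ z ≤ |z| := by
  unfold Jd
  have : √(z ^ 2 + δ ^ 2) ≤ |z| + δ := by
    apply Real.sqrt_le_iff.2
    constructor
    · positivity
    · nlinarith [sq_abs z, mul_nonneg (abs_nonneg z) hδ]
  linarith

lemma Jd_nonneg {δ : ℝ} (z : ℝ) : 0 ≤ Jd δ z := by
  unfold Jd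
  have : δ ≤ √(z ^ 2 + δ ^ 2) := Real.le_sqrt_of_sq_le (by nlinarith [sq_nonneg z])
  linarith

lemma Jd_zero (z : ℝ) : Jd 0 z = |z| := by
  unfold Jd; simp [Real.sqrt_sq_eq_abs]

lemma Jd_convex {δ : ℝ} (hδ : 0 < δ) (z y : ℝ) : Jd δ z - Jd δ y ≤ gd δ z * (z - y) := by
  unfold Jd gd
  have hz := rt_pos hδ z
  have hy := rt_pos hδ y
  have hsz : √(z ^ 2 + δ ^ 2) ^ 2 = z ^ 2 + δ ^ 2 := Real.sq_sqrt (by positivity)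
  have hsy : √(y ^ 2 + δ ^ 2) ^ 2 = y ^ 2 + δ ^ 2 := Real.sq_sqrt (by positivity)
  set r := √(z ^ 2 + δ ^ 2)
  set q := √(y ^ 2 + δ ^ 2)
  have h1 : z * y + δ ^ 2 ≤ r * q := by
    have h2 : (z * y + δ ^ 2) ^ 2 ≤ (r * q) ^ 2 := by
      rw [mul_pow, hsz, hsy]; nlinarith [sq_nonneg (δ * (z - y))]
    exact le_of_abs_le (abs_le_of_sq_le_sq h2 (mul_pos hz hy).le)
  rw [div_mul_eq_mul_div, le_div_iff₀ hz]
  nlinarith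

/-- `1 - g` is small away from zero -/
lemma one_sub_gd_le {δ z c : ℝ} (hδ : 0 < δ) (hc : 0 < c) (hz : c ≤ z) :
    1 - gd δ z ≤ δ / c := by
  have hz0 : 0 < z := hc.trans_le hz
  have h1 := Jd_upper hδ.le z
  rw [abs_of_pos hz0] at h1
  unfold Jd at h1
  unfold gd
  have hr := rt_pos hδ z
  have hr2 := abs_le_rt δ z
  rw [abs_of_pos hz0] at hr2
  set r := √(z ^ 2 + δ ^ 2)
  rw [sub_le_iff_le_add, ← sub_le_iff_le_add', le_div_iff₀ hr, sub_mul, one_mul]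
  have : δ ≤ δ / c * r := by
    rw [div_mul_eq_mul_div, le_div_iff₀ hc]
    nlinarith
  linarith

lemma expA_hasDeriv (A x : ℝ) :
    HasDerivAt (fun x : ℝ => Real.exp (-A * x)) (-A * Real.exp (-A * x)) x := by
  have h1 : HasDerivAt (fun x : ℝ => -A * x) (-A) x := by
    simpa using (hasDerivAt_id x).const_mul (-A)
  have := h1.exp
  rwa [mul_comm] at this

lemma parts_exp {A c : ℝ} {f f' : ℝ → ℝ} (hc : 0 ≤ c) (hf : Continuous f) (hf' : Continuous f')
    (hd : ∀ x ∈ Ioo 0 c, HasDerivAt f (f' x) x) :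
    ∫ x in (0:ℝ)..c, (-A * Real.exp (-A * x)) * f' x =
      (-A * Real.exp (-A * c)) * f c + A * f 0 - A ^ 2 * ∫ x in (0:ℝ)..c, f x * Real.exp (-A * x) := by
  have h := intervalIntegral.integral_mul_deriv_eq_deriv_mul_of_hasDerivAt
    (a := 0) (b := c) (u := fun x => -A * Real.exp (-A * x))
    (u' := fun x => -A * (-A * Real.exp (-A * x))) (v := f) (v' := f')
    (by fun_prop) hf.continuousOn
    (fun x _ => (expA_hasDeriv A x).const_mul (-A))
    (by rw [min_eq_left hc, max_eq_right hc]; exact hd)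
    ((by fun_prop : Continuous fun x => -A * (-A * Real.exp (-A * x))).intervalIntegrable _ _)
    (hf'.intervalIntegrable _ _)
  rw [h, ← intervalIntegral.integral_const_mul]
  have e : ∀ x, -A * (-A * Real.exp (-A * x)) * f x = A ^ 2 * (f x * Real.exp (-A * x)) := by
    intro x; ring
  simp only [e]
  simp

lemma lam_bound {A δ a b sp σp : ℝ} (hA : 0 ≤ A) (hδ : 0 < δ) (ha : 0 ≤ a) (hab : a ≤ b)
    {U V P R : ℝ → ℝ} (hU : Continuous U) (hV : Continuous V) (hP : Continuous P)
    (hR : Continuous R) (hUd : ∀ x ∈ Ioo 0 a, HasDerivAt U (P x) x)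
    (hVd : ∀ x ∈ Ioo 0 b, HasDerivAt V (R x) x) (hUa : U a = 0) (hVb : V b = 0) (hVa : 0 ≤ V a)
    (hsp : sp = - P a) (hsp0 : 0 ≤ sp) (hσp : σp = - R b)
    (hbd : |P 0 - R 0| ≤ A * |U 0 - V 0|)
    (η η' : ℝ → ℝ) (hη : ∀ x, η x = gd δ (U x - V x) * Real.exp (-A * x))
    (hη' : ∀ x, η' x = gd' δ (U x - V x) * (P x - R x) * Real.exp (-A * x) +
        gd δ (U x - V x) * (-A * Real.exp (-A * x))) :
    (η a * P a - η 0 * P 0 - ∫ x in (0:ℝ)..a, η' x * P x)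
      - (η a * R a - η 0 * R 0 - ∫ x in (0:ℝ)..a, η' x * R x)
      - (Real.exp (-A * a) * R a - Real.exp (-A * 0) * R 0
          - ∫ x in (0:ℝ)..a, (-A * Real.exp (-A * x)) * R x)
      + (Real.exp (-A * b) * R b - Real.exp (-A * 0) * R 0
          - ∫ x in (0:ℝ)..b, (-A * Real.exp (-A * x)) * R x)
      + sp * ((Jd δ (U a - V a) - 1 - V a) * Real.exp (-A * a))
      + σp * ((1 + V b) * Real.exp (-A * b)) ≤
    A ^ 2 * ((∫ x in (0:ℝ)..a, (Jd δ (U x - V x) - 1 - V x) * Real.exp (-A * x))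
        + ∫ x in (0:ℝ)..b, (1 + V x) * Real.exp (-A * x))
      + A * δ + (1 - gd δ (V a)) * max 0 (P a - R a) := by
  have hb : 0 ≤ b := ha.trans hab
  have hw : Continuous fun x => U x - V x := hU.sub hV
  have hg : Continuous fun x => gd δ (U x - V x) := (gd_cont hδ).comp hw
  have hg' : Continuous fun x => gd' δ (U x - V x) := (gd'_cont hδ).comp hw
  have hJ : Continuous fun x => Jd δ (U x - V x) := (Jd_cont δ).comp hw
  have hE : Continuous fun x : ℝ => Real.exp (-A * x) := by fun_prop
  have hη'c : Continuous η' := by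
    have : η' = fun x => gd' δ (U x - V x) * (P x - R x) * Real.exp (-A * x) +
        gd δ (U x - V x) * (-A * Real.exp (-A * x)) := funext hη'
    rw [this]; fun_prop
  -- first integral
  have i1 : (∫ x in (0:ℝ)..a, (-A * Real.exp (-A * x)) * (gd δ (U x - V x) * (P x - R x))) ≤
      (∫ x in (0:ℝ)..a, η' x * P x) - ∫ x in (0:ℝ)..a, η' x * R x := by
    rw [← intervalIntegral.integral_sub (Continuous.intervalIntegrable (by fun_prop) _ _)
      (Continuous.intervalIntegrable (by fun_prop) _ _)]
    apply intervalIntegral.integral_mono_on ha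
    · exact Continuous.intervalIntegrable (by fun_prop) _ _
    · exact Continuous.intervalIntegrable (by fun_prop) _ _
    · intro x _
      rw [hη']
      have : 0 ≤ gd' δ (U x - V x) * (P x - R x) ^ 2 * Real.exp (-A * x) :=
        mul_nonneg (mul_nonneg (gd'_nonneg _ _) (sq_nonneg _)) (Real.exp_pos _).le
      nlinarith
  have i2 := parts_exp (A := A) (c := a) (f := fun x => Jd δ (U x - V x))
    (f' := fun x => gd δ (U x - V x) * (P x - R x)) ha hJ (by fun_prop) (by
      intro x hx
      exact (Jd_hasDeriv hδ _).comp x ((hUd x hx).sub (hVd x ⟨hx.1, hx.2.trans_le hab⟩)))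
  have i3 := parts_exp (A := A) (c := a) (f := V) (f' := R) ha hV hR
    (fun x hx => hVd x ⟨hx.1, hx.2.trans_le hab⟩)
  have i4 := parts_exp (A := A) (c := b) (f := V) (f' := R) hb hV hR hVd
  have hEm : (∫ x in (0:ℝ)..a, Real.exp (-A * x)) ≤ ∫ x in (0:ℝ)..b, Real.exp (-A * x) := by
    apply intervalIntegral.integral_mono_interval le_rfl ha hab
    · exact Eventually.of_forall fun x => (Real.exp_pos _).le
    · exact hE.intervalIntegrable _ _
  have e1 : (∫ x in (0:ℝ)..a, (Jd δ (U x - V x) - 1 - V x) * Real.exp (-A * x)) =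
      (∫ x in (0:ℝ)..a, Jd δ (U x - V x) * Real.exp (-A * x))
      - (∫ x in (0:ℝ)..a, Real.exp (-A * x)) - ∫ x in (0:ℝ)..a, V x * Real.exp (-A * x) := by
    rw [← intervalIntegral.integral_sub, ← intervalIntegral.integral_sub]
    · congr 1; ext x; ring
    all_goals exact Continuous.intervalIntegrable (by fun_prop) _ _
  have e2 : (∫ x in (0:ℝ)..b, (1 + V x) * Real.exp (-A * x)) =
      (∫ x in (0:ℝ)..b, Real.exp (-A * x)) + ∫ x in (0:ℝ)..b, V x * Real.exp (-A * x) := by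
    rw [← intervalIntegral.integral_add]
    · congr 1; ext x; ring
    all_goals exact Continuous.intervalIntegrable (by fun_prop) _ _
  rw [e1, e2, i3, i4, hη a, hη 0, hUa, hVb]
  rw [i2] at i1
  simp only [mul_zero, Real.exp_zero, zero_sub, gd_neg, mul_one] at i1 ⊢
  rw [hUa] at i1
  simp only [zero_sub, Jd_neg] at i1 ⊢
  have hEa : 0 < Real.exp (-A * a) := Real.exp_pos _
  have hEa1 : Real.exp (-A * a) ≤ 1 := by
    rw [Real.exp_le_one_iff]; nlinarith
  -- boundary at zero
  have b0 : gd δ (U 0 - V 0) * (R 0 - P 0) ≤ A * Jd δ (U 0 - V 0) + A * δ := by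
    have h1 : gd δ (U 0 - V 0) * (R 0 - P 0) ≤ |P 0 - R 0| := by
      calc gd δ (U 0 - V 0) * (R 0 - P 0) ≤ |gd δ (U 0 - V 0) * (R 0 - P 0)| := le_abs_self _
        _ = |gd δ (U 0 - V 0)| * |R 0 - P 0| := abs_mul _ _
        _ ≤ 1 * |R 0 - P 0| := mul_le_mul_of_nonneg_right (gd_abs_le hδ _) (abs_nonneg _)
        _ = |P 0 - R 0| := by rw [one_mul, abs_sub_comm]
    have h2 := mul_le_mul_of_nonneg_left (Jd_lower δ (U 0 - V 0)) hA
    nlinarith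
  have hJV := Jd_upper hδ.le (V a)
  rw [abs_of_nonneg hVa] at hJV
  have hg1 : 0 ≤ 1 - gd δ (V a) := by linarith [(abs_le.1 (gd_abs_le hδ (V a))).2]
  have ba : (1 - gd δ (V a)) * (P a - R a) * Real.exp (-A * a) ≤
      (1 - gd δ (V a)) * max 0 (P a - R a) := by
    have h1 : (P a - R a) * Real.exp (-A * a) ≤ max 0 (P a - R a) := by
      have := le_max_right 0 (P a - R a)
      have h0 := le_max_left 0 (P a - R a)
      calc (P a - R a) * Real.exp (-A * a) ≤ max 0 (P a - R a) * Real.exp (-A * a) :=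
            mul_le_mul_of_nonneg_right this hEa.le
        _ ≤ max 0 (P a - R a) * 1 := mul_le_mul_of_nonneg_left hEa1 h0
        _ = _ := mul_one _
    rw [mul_assoc]
    exact mul_le_mul_of_nonneg_left h1 hg1
  have bb : 0 ≤ A * Real.exp (-A * a) * (V a - Jd δ (V a)) :=
    mul_nonneg (mul_nonneg hA hEa.le) (by linarith)
  have bc : 0 ≤ sp * Real.exp (-A * a) * (V a - Jd δ (V a)) :=
    mul_nonneg (mul_nonneg hsp0 hEa.le) (by linarith)
  have bd : 0 ≤ A ^ 2 * ((∫ x in (0:ℝ)..b, Real.exp (-A * x)) -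
      ∫ x in (0:ℝ)..a, Real.exp (-A * x)) := mul_nonneg (sq_nonneg _) (by linarith)
  rw [hσp]
  have hPa : P a = - sp := by linarith
  rw [hPa] at ba ⊢
  nlinarith


def Fd (A δ : ℝ) (s : ℝ → ℝ) (u : ℝ → ℝ → ℝ) (σ : ℝ → ℝ) (v : ℝ → ℝ → ℝ) (t : ℝ) : ℝ :=
  (∫ x in (0:ℝ)..(min (s t) (σ t)),
      (Jd δ (u t x - v t x) - 2 - u t x - v t x) * Real.exp (-A * x))
    + (∫ x in (0:ℝ)..(s t), (1 + u t x) * Real.exp (-A * x))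
    + ∫ x in (0:ℝ)..(σ t), (1 + v t x) * Real.exp (-A * x)

lemma Fd_symm (A δ : ℝ) (s : ℝ → ℝ) (u : ℝ → ℝ → ℝ) (σ : ℝ → ℝ) (v : ℝ → ℝ → ℝ) (t : ℝ) :
    Fd A δ s u σ v t = Fd A δ σ v s u t := by
  unfold Fd
  have e : (∫ x in (0:ℝ)..(min (s t) (σ t)),
      (Jd δ (u t x - v t x) - 2 - u t x - v t x) * Real.exp (-A * x)) =
      ∫ x in (0:ℝ)..(min (σ t) (s t)),
      (Jd δ (v t x - u t x) - 2 - v t x - u t x) * Real.exp (-A * x) := by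
    rw [min_comm]
    congr 1
    ext x
    rw [← Jd_neg δ (u t x - v t x), neg_sub]
    ring
  rw [e]; ring

lemma Fd_eq_ext {A δ t : ℝ} {s σ : ℝ → ℝ} {u v U V : ℝ → ℝ → ℝ} (hs : 0 ≤ s t) (hσ : 0 ≤ σ t)
    (hUe : ∀ x ∈ Icc 0 (s t), U t x = u t x) (hVe : ∀ x ∈ Icc 0 (σ t), V t x = v t x) :
    Fd A δ s u σ v t = Fd A δ s U σ V t := by
  unfold Fd
  congr 1
  · congr 1
    · apply intervalIntegral.integral_congr
      intro x hx
      rw [uIcc_of_le (le_min hs hσ)] at hx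
      simp only
      rw [hUe x ⟨hx.1, hx.2.trans (min_le_left _ _)⟩, hVe x ⟨hx.1, hx.2.trans (min_le_right _ _)⟩]
    · apply intervalIntegral.integral_congr
      intro x hx
      rw [uIcc_of_le hs] at hx
      simp only
      rw [hUe x hx]
  · apply intervalIntegral.integral_congr
    intro x hx
    rw [uIcc_of_le hσ] at hx
    simp only
    rw [hVe x hx]

lemma Fd_eq_le {A δ t : ℝ} {s σ : ℝ → ℝ} {U V : ℝ → ℝ → ℝ} (hle : s t ≤ σ t)
    (hU : Continuous (U t)) (hV : Continuous (V t)) :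
    Fd A δ s U σ V t = (∫ x in (0:ℝ)..(s t), (Jd δ (U t x - V t x) - 1 - V t x) * Real.exp (-A * x))
      + ∫ x in (0:ℝ)..(σ t), (1 + V t x) * Real.exp (-A * x) := by
  unfold Fd
  have hJ : Continuous fun x => Jd δ (U t x - V t x) := (Jd_cont δ).comp (hU.sub hV)
  rw [min_eq_left hle, ← intervalIntegral.integral_add]
  · congr 2; ext x; ring
  all_goals exact Continuous.intervalIntegrable (by fun_prop) _ _

lemma slope_int {f s : ℝ → ℝ} {t0 a : ℝ} (hf : Continuous f) (hs : DifferentiableAt ℝ s t0)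
    (ha : a = s t0) :
    Tendsto (fun t => (∫ x in (s t)..a, f x) / (t0 - t)) (𝓝[<] t0) (𝓝 (deriv s t0 * f a)) := by
  have h1 : HasDerivAt (fun y => ∫ x in y..a, f x) (- f a) (s t0) := by
    rw [← ha]
    exact intervalIntegral.integral_hasDerivAt_left (hf.intervalIntegrable _ _)
      (hf.stronglyMeasurableAtFilter _ _) hf.continuousAt
  have h2 : HasDerivAt (fun t => ∫ x in (s t)..a, f x) (- f a * deriv s t0) t0 :=
    h1.comp t0 hs.hasDerivAt
  rw [hasDerivAt_iff_tendsto_slope] at h2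
  have h3 := (h2.mono_left (nhdsWithin_mono t0 (fun x hx => ne_of_lt hx :
    Iio t0 ⊆ {t0}ᶜ))).neg
  have e : -(-f a * deriv s t0) = deriv s t0 * f a := by ring
  rw [e] at h3
  refine h3.congr' ?_
  filter_upwards [self_mem_nhdsWithin] with t ht
  rw [slope_def_field, ← ha, intervalIntegral.integral_same]
  have : t - t0 ≠ 0 := (sub_neg.2 ht).ne
  have h' : t0 - t ≠ 0 := (sub_pos.2 ht).ne'
  rw [sub_zero, ← div_neg, neg_sub]

section core
variable {p s₀ T : ℝ} {φ s σ : ℝ → ℝ} {u v : ℝ → ℝ → ℝ}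

lemma sol_hasDeriv_ext (h : IsSolOn p s₀ φ T s u) {t1 t0 : ℝ} (ht1 : 0 < t1) (h1 : t1 ≤ t0)
    (ht0 : t0 ≤ T) {P U : ℝ → ℝ → ℝ}
    (hPe : ∀ t ∈ Icc t1 T, ∀ x ∈ Icc 0 (s t), P t x = deriv (u t) x)
    (hUe : ∀ t ∈ Icc 0 T, ∀ x ∈ Icc 0 (s t), U t x = u t x) :
    ∀ x ∈ Ioo 0 (s t0), HasDerivAt (U t0) (P t0 x) x := by
  intro x hx
  rw [hPe t0 ⟨h1, ht0⟩ x ⟨hx.1.le, hx.2.le⟩]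
  refine (h.ux_diff t0 ⟨by linarith, ht0⟩ x hx).hasDerivAt.congr_of_eventuallyEq ?_
  filter_upwards [Ioo_mem_nhds hx.1 hx.2] with z hz
  exact hUe t0 ⟨by linarith, ht0⟩ z (Ioo_subset_Icc_self hz)

lemma core (h1 : IsSolOn p s₀ φ T s u) (h2 : IsSolOn p s₀ φ T σ v) {A δ t0 L : ℝ}
    (hA : 0 ≤ A) (hδ : 0 < δ) (ht0 : t0 ∈ Ioo 0 T) (hle : s t0 ≤ σ t0)
    (hbd : |u t0 0 ^ p - v t0 0 ^ p| ≤ A * |u t0 0 - v t0 0|)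
    (hL : A ^ 2 * Fd A δ s u σ v t0 + A * δ + (1 - gd δ (v t0 (s t0))) *
      max 0 (deriv (u t0) (s t0) - deriv (v t0) (s t0)) < L) :
    ∀ᶠ t in 𝓝[<] t0, s t ≤ σ t →
      Fd A δ s u σ v t0 - Fd A δ s u σ v t ≤ L * (t0 - t) := by
  have h0 := ht0.1
  have hT := ht0.2
  have hm0 : t0 ∈ Ioc 0 T := ⟨h0, hT.le⟩
  have hm0' : t0 ∈ Icc 0 T := ⟨h0.le, hT.le⟩
  obtain ⟨U, hU, hUe⟩ := sol_ext_u h1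
  obtain ⟨V, hV, hVe⟩ := sol_ext_u h2
  set t1 := t0 / 2 with ht1
  have ht1p : 0 < t1 := by linarith
  have ht10 : t1 < t0 := by linarith
  obtain ⟨P, hP, hPe⟩ := sol_ext_ux h1 ht1p (by linarith)
  obtain ⟨R, hR, hRe⟩ := sol_ext_ux h2 ht1p (by linarith)
  have hm1 : t0 ∈ Icc t1 T := ⟨ht10.le, hT.le⟩
  have sec : ∀ {W : ℝ → ℝ → ℝ}, Continuous (Function.uncurry W) → ∀ t, Continuous (W t) :=
    fun hW t => hW.comp (Continuous.prodMk continuous_const continuous_id)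
  have sec2 : ∀ {W : ℝ → ℝ → ℝ}, Continuous (Function.uncurry W) → ∀ x, Continuous fun t => W t x :=
    fun hW t => hW.comp (Continuous.prodMk continuous_id continuous_const)
  have hs0 := h1.s_pos t0 hm0'
  have hσ0 := h2.s_pos t0 hm0'
  have hUt := sec hU t0
  have hVt := sec hV t0
  have hPt := sec hP t0
  have hRt := sec hR t0
  have hw : Continuous fun x => U t0 x - V t0 x := hUt.sub hVt
  have hg : Continuous fun x => gd δ (U t0 x - V t0 x) := (gd_cont hδ).comp hw
  have hg' : Continuous fun x => gd' δ (U t0 x - V t0 x) := (gd'_cont hδ).comp hw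
  have hJ : Continuous fun x => Jd δ (U t0 x - V t0 x) := (Jd_cont δ).comp hw
  have hE : Continuous fun x : ℝ => Real.exp (-A * x) := by fun_prop
  have hE' : Continuous fun x : ℝ => -A * Real.exp (-A * x) := by fun_prop
  obtain ⟨η, hη⟩ : ∃ η : ℝ → ℝ, ∀ x, η x = gd δ (U t0 x - V t0 x) * Real.exp (-A * x) :=
    ⟨_, fun _ => rfl⟩
  obtain ⟨η', hη'⟩ : ∃ η' : ℝ → ℝ, ∀ x, η' x =
    gd' δ (U t0 x - V t0 x) * (P t0 x - R t0 x) * Real.exp (-A * x) +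
        gd δ (U t0 x - V t0 x) * (-A * Real.exp (-A * x)) := ⟨_, fun _ => rfl⟩
  have hηc : Continuous η := by rw [funext hη]; fun_prop
  have hη'c : Continuous η' := by rw [funext hη']; fun_prop
  have hUd := sol_hasDeriv_ext h1 ht1p ht10.le hT.le hPe hUe
  have hVd := sol_hasDeriv_ext h2 ht1p ht10.le hT.le hRe hVe
  have hηd : ∀ x ∈ Ioo 0 (s t0), HasDerivAt η (η' x) x := by
    intro x hx
    rw [funext hη, hη']
    exact ((gd_hasDeriv hδ _).comp x ((hUd x hx).sub (hVd x ⟨hx.1, hx.2.trans_le hle⟩))).mul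
      (expA_hasDeriv A x)
  -- the kernel
  set k : ℝ → ℝ → ℝ := fun t τ =>
    (η (s t) * P τ (s t) - η 0 * P τ 0 - ∫ x in (0:ℝ)..(s t), η' x * P τ x)
      - (η (s t) * R τ (s t) - η 0 * R τ 0 - ∫ x in (0:ℝ)..(s t), η' x * R τ x)
      - (Real.exp (-A * s t) * R τ (s t) - Real.exp (-A * 0) * R τ 0
          - ∫ x in (0:ℝ)..(s t), (-A * Real.exp (-A * x)) * R τ x)
      + (Real.exp (-A * σ t) * R τ (σ t) - Real.exp (-A * 0) * R τ 0
          - ∫ x in (0:ℝ)..(σ t), (-A * Real.exp (-A * x)) * R τ x) with hk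
  -- continuity of blocks
  have blk : ∀ {W : ℝ → ℝ → ℝ} {θ θ' : ℝ → ℝ}, Continuous (Function.uncurry W) → Continuous θ →
      Continuous θ' → Continuous fun q : ℝ × ℝ =>
        θ q.1 * W q.2 q.1 - θ 0 * W q.2 0 - ∫ x in (0:ℝ)..q.1, θ' x * W q.2 x := by
    intro W θ θ' hW hθ hθ'
    have c1 : Continuous fun q : ℝ × ℝ => W q.2 q.1 := hW.comp continuous_swap
    have c2 : Continuous fun q : ℝ × ℝ => W q.2 0 := (sec2 hW 0).comp continuous_snd
    have c3 : Continuous fun q : ℝ × ℝ => θ q.1 := hθ.comp continuous_fst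
    have c4 : Continuous fun q : ℝ × ℝ => ∫ x in (0:ℝ)..q.1, θ' x * W q.2 x := by
      have c5 : Continuous (Function.uncurry fun τ x => θ' x * W τ x) :=
        (hθ'.comp continuous_snd).mul hW
      exact (intervalIntegral.continuous_parametric_primitive_of_continuous
        (μ := volume) (a₀ := 0) c5).comp continuous_swap
    exact ((c3.mul c1).sub (c2.const_mul _)).sub c4
  have hsc : ContinuousAt s t0 := (h1.s_diff t0 hm0).continuousAt
  have hσc : ContinuousAt σ t0 := (h2.s_diff t0 hm0).continuousAt
  have blkA : ∀ {W : ℝ → ℝ → ℝ} {θ θ' c : ℝ → ℝ}, Continuous (Function.uncurry W) → Continuous θ →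
      Continuous θ' → ContinuousAt c t0 → ContinuousAt (fun q : ℝ × ℝ =>
        θ (c q.1) * W q.2 (c q.1) - θ 0 * W q.2 0 - ∫ x in (0:ℝ)..(c q.1), θ' x * W q.2 x)
        (t0, t0) := by
    intro W θ θ' c hW hθ hθ' hc
    have c0 : ContinuousAt (fun q : ℝ × ℝ => ((c q.1, q.2) : ℝ × ℝ)) (t0, t0) := by
      apply ContinuousAt.prodMk
      · exact ContinuousAt.comp (f := Prod.fst) hc continuousAt_fst
      · exact continuousAt_snd
    exact ContinuousAt.comp (f := fun q : ℝ × ℝ => ((c q.1, q.2) : ℝ × ℝ))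
      (blk hW hθ hθ').continuousAt c0
  have blkI : ∀ {W : ℝ → ℝ → ℝ} {θ θ' : ℝ → ℝ}, Continuous (Function.uncurry W) → Continuous θ →
      Continuous θ' → ∀ y, Continuous fun τ : ℝ =>
        θ y * W τ y - θ 0 * W τ 0 - ∫ x in (0:ℝ)..y, θ' x * W τ x := by
    intro W θ θ' hW hθ hθ' y
    exact (blk hW hθ hθ').comp (Continuous.prodMk (continuous_const (y := y)) continuous_id)
  have hkA : ContinuousAt (Function.uncurry k) (t0, t0) :=
    (((blkA hP hηc hη'c hsc).sub (blkA hR hηc hη'c hsc)).sub (blkA hR hE hE' hsc)).add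
      (blkA hR hE hE' hσc)
  have hkI : ∀ t, Continuous (k t) := fun t =>
    (((blkI hP hηc hη'c (s t)).sub (blkI hR hηc hη'c (s t))).sub (blkI hR hE hE' (s t))).add
      (blkI hR hE hE' (σ t))
  have lim1 := avg_tendsto hkA (Eventually.of_forall fun t => (hkI t).intervalIntegrable _ _)
  have hf2 : Continuous fun x => (Jd δ (U t0 x - V t0 x) - 1 - V t0 x) * Real.exp (-A * x) := by
    fun_prop
  have hf3 : Continuous fun x => (1 + V t0 x) * Real.exp (-A * x) := by fun_prop
  have lim2 := slope_int hf2 (h1.s_diff t0 hm0) rfl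
  have lim3 := slope_int hf3 (h2.s_diff t0 hm0) rfl
  have lim := (lim1.add lim2).add lim3
  have hFt0 : Fd A δ s u σ v t0 = Fd A δ s U σ V t0 :=
    Fd_eq_ext hs0.le hσ0.le (hUe t0 hm0') (hVe t0 hm0')
  have hzs : (0:ℝ) ∈ Icc 0 (s t0) := ⟨le_rfl, hs0.le⟩
  have hzσ : (0:ℝ) ∈ Icc 0 (σ t0) := ⟨le_rfl, hσ0.le⟩
  have hss : s t0 ∈ Icc 0 (s t0) := ⟨hs0.le, le_rfl⟩
  have hsσ : s t0 ∈ Icc 0 (σ t0) := ⟨hs0.le, hle⟩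
  have hσσ : σ t0 ∈ Icc 0 (σ t0) := ⟨hσ0.le, le_rfl⟩
  have bound := lam_bound (A := A) (δ := δ) (a := s t0) (b := σ t0) (sp := deriv s t0)
    (σp := deriv σ t0) hA hδ hs0.le hle hUt hVt hPt hRt hUd hVd
    (by rw [hUe t0 hm0' _ hss, h1.bc_free t0 hm0])
    (by rw [hVe t0 hm0' _ hσσ, h2.bc_free t0 hm0])
    (by rw [hVe t0 hm0' _ hsσ]; exact h2.u_nonneg t0 hm0' _ hsσ)
    (by rw [hPe t0 hm1 _ hss, h1.stefan t0 hm0])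
    (by rw [h1.stefan t0 hm0]; linarith [sol_ux_nonpos h1 hm0])
    (by rw [hRe t0 hm1 _ hσσ, h2.stefan t0 hm0])
    (by
      rw [hPe t0 hm1 _ hzs, hRe t0 hm1 _ hzσ, hUe t0 hm0' _ hzs, hVe t0 hm0' _ hzσ]
      have e1 := h1.bc_zero t0 hm0
      have e2 := h2.bc_zero t0 hm0
      rw [← e1, ← e2] at hbd
      rw [← abs_neg]
      convert hbd using 2
      ring)
    η η' hη hη'
  have hL' : A ^ 2 * ((∫ x in (0:ℝ)..(s t0), (Jd δ (U t0 x - V t0 x) - 1 - V t0 x) * Real.exp (-A * x))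
      + ∫ x in (0:ℝ)..(σ t0), (1 + V t0 x) * Real.exp (-A * x)) + A * δ
      + (1 - gd δ (V t0 (s t0))) * max 0 (P t0 (s t0) - R t0 (s t0)) < L := by
    rw [← Fd_eq_le hle hUt hVt, ← hFt0, hVe t0 hm0' _ hsσ, hPe t0 hm1 _ hss, hRe t0 hm1 _ hsσ]
    exact hL
  have hlim := lim.eventually (gt_mem_nhds (lt_of_le_of_lt bound hL'))
  filter_upwards [hlim, Ioo_mem_nhdsLT ht10] with t hlt ht hst
  have htp : 0 < t0 - t := sub_pos.2 ht.2
  have hmt : t ∈ Icc 0 T := ⟨by linarith [ht.1], by linarith [ht.2]⟩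
  have hst0 : s t ≤ s t0 := sol_mono h1 hmt hm0' ht.2.le
  have hsp := h1.s_pos t hmt
  have hσp := h2.s_pos t hmt
  have hUt' := sec hU t
  have hVt' := sec hV t
  have hFt : Fd A δ s u σ v t = Fd A δ s U σ V t :=
    Fd_eq_ext hsp.le hσp.le (hUe t hmt) (hVe t hmt)
  rw [← add_div, ← add_div, div_lt_iff₀ htp] at hlt
  refine le_trans ?_ hlt.le
  rw [hFt0, hFt, Fd_eq_le hle hUt hVt, Fd_eq_le hst hUt' hVt']
  have r1 := sol_rect h1 ht1p ht.1.le ht.2 hT.le hP hPe hU hUe (y := s t) ⟨hsp.le, le_rfl⟩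
    hηc hη'c (fun x hx => hηd x ⟨hx.1, hx.2.trans_le hst0⟩)
  have r2 := sol_rect h2 ht1p ht.1.le ht.2 hT.le hR hRe hV hVe (y := s t) ⟨hsp.le, hst⟩
    hηc hη'c (fun x hx => hηd x ⟨hx.1, hx.2.trans_le hst0⟩)
  have r3 := sol_rect h2 ht1p ht.1.le ht.2 hT.le hR hRe hV hVe (y := s t) ⟨hsp.le, hst⟩
    hE hE' (fun x hx => expA_hasDeriv A x)
  have r4 := sol_rect h2 ht1p ht.1.le ht.2 hT.le hR hRe hV hVe (y := σ t) ⟨hσp.le, le_rfl⟩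
    hE hE' (fun x hx => expA_hasDeriv A x)
  have ik : ∫ τ in t..t0, k t τ =
      (∫ x in (0:ℝ)..(s t), η x * (U t0 x - U t x)) - (∫ x in (0:ℝ)..(s t), η x * (V t0 x - V t x))
      - (∫ x in (0:ℝ)..(s t), Real.exp (-A * x) * (V t0 x - V t x))
      + ∫ x in (0:ℝ)..(σ t), Real.exp (-A * x) * (V t0 x - V t x) := by
    rw [r1, r2, r3, r4, ← intervalIntegral.integral_sub, ← intervalIntegral.integral_sub,
      ← intervalIntegral.integral_add]
    · exact (((blkI hP hηc hη'c (s t)).sub (blkI hR hηc hη'c (s t))).sub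
        (blkI hR hE hE' (s t))).intervalIntegrable _ _
    · exact (blkI hR hE hE' (σ t)).intervalIntegrable _ _
    · exact ((blkI hP hηc hη'c (s t)).sub (blkI hR hηc hη'c (s t))).intervalIntegrable _ _
    · exact (blkI hR hE hE' (s t)).intervalIntegrable _ _
    · exact (blkI hP hηc hη'c (s t)).intervalIntegrable _ _
    · exact (blkI hR hηc hη'c (s t)).intervalIntegrable _ _
  rw [ik]
  have hJ' : Continuous fun x => Jd δ (U t x - V t x) := (Jd_cont δ).comp (hUt'.sub hVt')
  have hf2' : Continuous fun x => (Jd δ (U t x - V t x) - 1 - V t x) * Real.exp (-A * x) := by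
    fun_prop
  have hf3' : Continuous fun x => (1 + V t x) * Real.exp (-A * x) := by fun_prop
  rw [← intervalIntegral.integral_add_adjacent_intervals (hf2.intervalIntegrable 0 (s t))
      (hf2.intervalIntegrable (s t) (s t0)),
    ← intervalIntegral.integral_add_adjacent_intervals (hf3.intervalIntegrable 0 (σ t))
      (hf3.intervalIntegrable (σ t) (σ t0))]
  have q1 : (∫ x in (0:ℝ)..(s t), (Jd δ (U t0 x - V t0 x) - 1 - V t0 x) * Real.exp (-A * x)) -
      (∫ x in (0:ℝ)..(s t), (Jd δ (U t x - V t x) - 1 - V t x) * Real.exp (-A * x)) ≤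
      (∫ x in (0:ℝ)..(s t), η x * (U t0 x - U t x)) - (∫ x in (0:ℝ)..(s t), η x * (V t0 x - V t x))
      - (∫ x in (0:ℝ)..(s t), Real.exp (-A * x) * (V t0 x - V t x)) := by
    rw [← intervalIntegral.integral_sub (hf2.intervalIntegrable _ _) (hf2'.intervalIntegrable _ _),
      ← intervalIntegral.integral_sub, ← intervalIntegral.integral_sub]
    · apply intervalIntegral.integral_mono_on hsp.le
      · exact Continuous.intervalIntegrable (by fun_prop) _ _
      · exact Continuous.intervalIntegrable (by fun_prop) _ _
      · intro x _
        rw [hη]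
        have := mul_le_mul_of_nonneg_right (Jd_convex hδ (U t0 x - V t0 x) (U t x - V t x))
          (Real.exp_pos (-A * x)).le
        nlinarith
    all_goals exact Continuous.intervalIntegrable (by fun_prop) _ _
  have q2 : (∫ x in (0:ℝ)..(σ t), (1 + V t0 x) * Real.exp (-A * x)) -
      (∫ x in (0:ℝ)..(σ t), (1 + V t x) * Real.exp (-A * x)) =
      ∫ x in (0:ℝ)..(σ t), Real.exp (-A * x) * (V t0 x - V t x) := by
    rw [← intervalIntegral.integral_sub (hf3.intervalIntegrable _ _) (hf3'.intervalIntegrable _ _)]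
    congr 1; ext x; ring
  linarith

end core


section fin
variable {p s₀ T : ℝ} {φ s σ : ℝ → ℝ} {u v : ℝ → ℝ → ℝ}

lemma sec_cont {W : ℝ → ℝ → ℝ} (hW : Continuous (Function.uncurry W)) (t : ℝ) :
    Continuous (W t) := hW.comp (Continuous.prodMk continuous_const continuous_id)

lemma Fd_contOn (h1 : IsSolOn p s₀ φ T s u) (h2 : IsSolOn p s₀ φ T σ v) (A δ : ℝ) :
    ContinuousOn (Fd A δ s u σ v) (Icc 0 T) := by
  obtain ⟨U, hU, hUe⟩ := sol_ext_u h1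
  obtain ⟨V, hV, hVe⟩ := sol_ext_u h2
  have e : EqOn (Fd A δ s u σ v) (Fd A δ s U σ V) (Icc 0 T) := fun t ht =>
    Fd_eq_ext (h1.s_pos t ht).le (h2.s_pos t ht).le (hUe t ht) (hVe t ht)
  refine ContinuousOn.congr ?_ e
  have hE : Continuous fun q : ℝ × ℝ => Real.exp (-A * q.2) := by fun_prop
  have hU' : Continuous fun q : ℝ × ℝ => U q.1 q.2 := hU
  have hV' : Continuous fun q : ℝ × ℝ => V q.1 q.2 := hV
  have key : ∀ (f : ℝ → ℝ → ℝ) (c : ℝ → ℝ), Continuous (Function.uncurry f) →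
      ContinuousOn c (Icc 0 T) → ContinuousOn (fun t => ∫ x in (0:ℝ)..(c t), f t x) (Icc 0 T) := by
    intro f c hf hc
    exact (intervalIntegral.continuous_parametric_primitive_of_continuous
        (μ := volume) (a₀ := 0) hf).comp_continuousOn (continuousOn_id.prodMk hc)
  have hJ : Continuous fun q : ℝ × ℝ => Jd δ (U q.1 q.2 - V q.1 q.2) :=
    (Jd_cont δ).comp (hU'.sub hV')
  refine ((key (fun t x => (Jd δ (U t x - V t x) - 2 - U t x - V t x) * Real.exp (-A * x)) _ ?_
    (fun t ht => (h1.s_cont t ht).min (h2.s_cont t ht))).add (key (fun t x => (1 + U t x) * Real.exp (-A * x)) _ ?_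
    h1.s_cont)).add (key (fun t x => (1 + V t x) * Real.exp (-A * x)) _ ?_ h2.s_cont)
  · exact (((hJ.sub continuous_const).sub hU').sub hV').mul hE
  · exact (continuous_const.add hU').mul hE
  · exact (continuous_const.add hV').mul hE

lemma Fd_compare (h1 : IsSolOn p s₀ φ T s u) (h2 : IsSolOn p s₀ φ T σ v) {A δ t : ℝ} (hA : 0 ≤ A)
    (hδ : 0 ≤ δ) (ht : t ∈ Icc 0 T) :
    Fd A δ s u σ v t ≤ Fd A 0 s u σ v t ∧ Fd A 0 s u σ v t ≤ Fd A δ s u σ v t + δ * s t := by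
  obtain ⟨U, hU, hUe⟩ := sol_ext_u h1
  obtain ⟨V, hV, hVe⟩ := sol_ext_u h2
  have e : ∀ δ, Fd A δ s u σ v t = Fd A δ s U σ V t := fun δ =>
    Fd_eq_ext (h1.s_pos t ht).le (h2.s_pos t ht).le (hUe t ht) (hVe t ht)
  rw [e, e]
  have hUt := sec_cont hU t
  have hVt := sec_cont hV t
  have hJ : ∀ δ, Continuous fun x => Jd δ (U t x - V t x) := fun δ => (Jd_cont δ).comp (hUt.sub hVt)
  have hJδ := hJ δ
  have hJ0 := hJ 0
  have hs := h1.s_pos t ht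
  have hσ := h2.s_pos t ht
  have hm : 0 ≤ min (s t) (σ t) := le_min hs.le hσ.le
  have c : ∀ δ, Continuous fun x =>
      (Jd δ (U t x - V t x) - 2 - U t x - V t x) * Real.exp (-A * x) := by
    intro δ
    have := hJ δ
    fun_prop
  have a1 : (∫ x in (0:ℝ)..(min (s t) (σ t)),
      (Jd δ (U t x - V t x) - 2 - U t x - V t x) * Real.exp (-A * x)) ≤
      ∫ x in (0:ℝ)..(min (s t) (σ t)),
      (Jd 0 (U t x - V t x) - 2 - U t x - V t x) * Real.exp (-A * x) := by
    apply intervalIntegral.integral_mono_on hm ((c δ).intervalIntegrable _ _)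
      ((c 0).intervalIntegrable _ _)
    intro x _
    apply mul_le_mul_of_nonneg_right _ (Real.exp_pos _).le
    have := Jd_upper (z := U t x - V t x) hδ
    rw [Jd_zero]; linarith
  have a2 : (∫ x in (0:ℝ)..(min (s t) (σ t)),
      (Jd 0 (U t x - V t x) - 2 - U t x - V t x) * Real.exp (-A * x)) ≤
      ∫ x in (0:ℝ)..(min (s t) (σ t)),
      ((Jd δ (U t x - V t x) - 2 - U t x - V t x) * Real.exp (-A * x) + δ) := by
    apply intervalIntegral.integral_mono_on hm ((c 0).intervalIntegrable _ _)
      (((c δ).add continuous_const).intervalIntegrable _ _)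
    intro x hx
    have h3 := Jd_lower (δ := δ) (z := U t x - V t x)
    have h4 : Real.exp (-A * x) ≤ 1 := Real.exp_le_one_iff.2 (by nlinarith [hx.1])
    have h5 := Real.exp_pos (-A * x)
    rw [Jd_zero]
    have h6 := mul_le_mul_of_nonneg_right h3 h5.le
    have h7 := mul_le_mul_of_nonneg_left h4 hδ
    show _ ≤ (Jd δ (U t x - V t x) - 2 - U t x - V t x) * Real.exp (-A * x) + δ
    nlinarith
  rw [intervalIntegral.integral_add ((c δ).intervalIntegrable _ _)
    (continuous_const.intervalIntegrable _ _), intervalIntegral.integral_const] at a2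
  have a3 : (min (s t) (σ t) - 0) • δ ≤ δ * s t := by
    rw [smul_eq_mul, sub_zero, mul_comm]
    exact mul_le_mul_of_nonneg_left (min_le_left _ _) hδ
  unfold Fd
  constructor <;> linarith

def Err (δ : ℝ) (s : ℝ → ℝ) (u v : ℝ → ℝ → ℝ) (t : ℝ) : ℝ :=
  (1 - gd δ (v t (s t))) * max 0 (deriv (u t) (s t) - deriv (v t) (s t))

lemma keyInt (h1 : IsSolOn p s₀ φ T s u) (h2 : IsSolOn p s₀ φ T σ v) {A ε δ0 a b M : ℝ}
    (hA : 0 ≤ A) (hδ0 : 0 < δ0) (ha : 0 ≤ a) (hab : a < b) (hb : b ≤ T)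
    (hbd : ∀ t ∈ Ioc 0 T, |u t 0 ^ p - v t 0 ^ p| ≤ A * |u t 0 - v t 0|)
    (hM : ∀ t ∈ Ioo a b, Fd A 0 s u σ v t ≤ M)
    (hE1 : ∀ δ ∈ Ioo 0 δ0, ∀ t ∈ Ioo a b, s t ≤ σ t → Err δ s u v t ≤ ε)
    (hE2 : ∀ δ ∈ Ioo 0 δ0, ∀ t ∈ Ioo a b, σ t ≤ s t → Err δ σ v u t ≤ ε) :
    Fd A 0 s u σ v b - Fd A 0 s u σ v a ≤ (A ^ 2 * M + ε) * (b - a) := by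
  have hsub : Icc a b ⊆ Icc 0 T := Icc_subset_Icc ha hb
  have step : ∀ δ ∈ Ioo 0 δ0, Fd A 0 s u σ v b - Fd A 0 s u σ v a ≤
      δ * s b + (A ^ 2 * M + A * δ + ε) * (b - a) := by
    intro δ hδ
    have d := dini_le (c := A ^ 2 * M + A * δ + ε) hab ((Fd_contOn h1 h2 A δ).mono hsub) (by
      intro t ht c' hc'
      have htT : t ∈ Ioo 0 T := ⟨ha.trans_lt ht.1, ht.2.trans_le hb⟩
      have htT' : t ∈ Ioc 0 T := ⟨htT.1, htT.2.le⟩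
      have hsc : ContinuousAt s t := (h1.s_diff t htT').continuousAt
      have hσc : ContinuousAt σ t := (h2.s_diff t htT').continuousAt
      have hF : A ^ 2 * Fd A δ s u σ v t ≤ A ^ 2 * M :=
        mul_le_mul_of_nonneg_left (((Fd_compare h1 h2 hA hδ.1.le ⟨htT.1.le, htT.2.le⟩).1).trans
          (hM t ht)) (sq_nonneg A)
      have c1 : s t ≤ σ t → ∀ᶠ t' in 𝓝[<] t, s t' ≤ σ t' →
          Fd A δ s u σ v t - Fd A δ s u σ v t' ≤ c' * (t - t') := by
        intro hle
        apply core h1 h2 hA hδ.1 htT hle (hbd t htT')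
        have := hE1 δ hδ t ht hle
        unfold Err at this
        linarith
      have c2 : σ t ≤ s t → ∀ᶠ t' in 𝓝[<] t, σ t' ≤ s t' →
          Fd A δ s u σ v t - Fd A δ s u σ v t' ≤ c' * (t - t') := by
        intro hle
        have hbd' := hbd t htT'
        rw [abs_sub_comm, abs_sub_comm (u t 0)] at hbd'
        have hc := core (L := c') h2 h1 hA hδ.1 htT hle hbd' (by
          have := hE2 δ hδ t ht hle
          unfold Err at this
          rw [Fd_symm]
          linarith)
        filter_upwards [hc] with t' h' hle'
        rw [Fd_symm A δ s, Fd_symm A δ s u σ v t']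
        exact h' hle'
      apply Eventually.frequently
      rcases lt_trichotomy (s t) (σ t) with hlt | heq | hlt
      · have : ∀ᶠ t' in 𝓝[<] t, s t' < σ t' :=
          nhdsWithin_le_nhds (hsc.eventually_lt hσc hlt)
        filter_upwards [this, c1 hlt.le] with t' h' h''
        exact h'' h'.le
      · filter_upwards [c1 heq.le, c2 heq.ge] with t' h' h''
        rcases le_total (s t') (σ t') with h | h
        · exact h' h
        · exact h'' h
      · have : ∀ᶠ t' in 𝓝[<] t, σ t' < s t' :=
          nhdsWithin_le_nhds (hσc.eventually_lt hsc hlt)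
        filter_upwards [this, c2 hlt.le] with t' h' h''
        exact h'' h'.le)
    have e1 := (Fd_compare h1 h2 hA hδ.1.le (hsub ⟨hab.le, le_rfl⟩)).2
    have e2 := (Fd_compare h1 h2 hA hδ.1.le (hsub ⟨le_rfl, hab.le⟩)).1
    linarith
  have lim : Tendsto (fun δ => δ * s b + (A ^ 2 * M + A * δ + ε) * (b - a)) (𝓝[>] 0)
      (𝓝 (0 * s b + (A ^ 2 * M + A * 0 + ε) * (b - a))) := by
    apply Tendsto.mono_left _ nhdsWithin_le_nhds
    apply Continuous.tendsto
    fun_prop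
  have := ge_of_tendsto lim (by
    filter_upwards [Ioo_mem_nhdsGT hδ0] with δ hδ using step δ hδ)
  linarith

lemma fromErr (h1 : IsSolOn p s₀ φ T s u) (h2 : IsSolOn p s₀ φ T σ v) {A ε δ0 t0 : ℝ}
    (hA : 0 ≤ A) (hδ0 : 0 < δ0) (ht0 : t0 ∈ Ioo 0 T) (hε : 0 < ε)
    (hbd : ∀ t ∈ Ioc 0 T, |u t 0 ^ p - v t 0 ^ p| ≤ A * |u t 0 - v t 0|)
    (hE : ∀ᶠ t in 𝓝[<] t0, ∀ δ ∈ Ioo 0 δ0, (s t ≤ σ t → Err δ s u v t ≤ ε / 2) ∧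
      (σ t ≤ s t → Err δ σ v u t ≤ ε / 2)) :
    ∀ᶠ t in 𝓝[<] t0, Fd A 0 s u σ v t0 - Fd A 0 s u σ v t ≤
      (A ^ 2 * Fd A 0 s u σ v t0 + ε) * (t0 - t) := by
  have hc : ContinuousAt (Fd A 0 s u σ v) t0 :=
    (Fd_contOn h1 h2 A 0).continuousAt (Icc_mem_nhds ht0.1 ht0.2)
  have hMe : ∀ᶠ t in 𝓝[<] t0, Fd A 0 s u σ v t < Fd A 0 s u σ v t0 + ε / (2 * (A ^ 2 + 1)) :=
    nhdsWithin_le_nhds (hc.eventually (gt_mem_nhds (lt_add_of_pos_right _ (by positivity))))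
  have hall := (hE.and hMe).and (Ioo_mem_nhdsLT ht0.1)
  obtain ⟨l, hl, hl'⟩ := (mem_nhdsLT_iff_exists_Ioo_subset).1 hall
  filter_upwards [Ioo_mem_nhdsLT hl] with t ht
  have hsub : ∀ r ∈ Ioo t t0, r ∈ Ioo l t0 := fun r hr => ⟨ht.1.trans hr.1, hr.2⟩
  have htp := (hl' ht).2
  have := keyInt h1 h2 hA hδ0 htp.1.le ht.2 ht0.2.le hbd
    (M := Fd A 0 s u σ v t0 + ε / (2 * (A ^ 2 + 1))) (ε := ε / 2)
    (fun r hr => (hl' (hsub r hr)).1.2.le)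
    (fun δ hδ r hr => ((hl' (hsub r hr)).1.1 δ hδ).1)
    (fun δ hδ r hr => ((hl' (hsub r hr)).1.1 δ hδ).2)
  refine this.trans (mul_le_mul_of_nonneg_right ?_ (sub_pos.2 ht.2).le)
  have : A ^ 2 * (ε / (2 * (A ^ 2 + 1))) ≤ ε / 2 := by
    rw [← mul_div_assoc, div_le_div_iff₀ (by positivity) (by norm_num)]
    nlinarith [sq_nonneg A]
  linarith

lemma Err_le {δ t : ℝ} (hδ : 0 < δ) :
    Err δ s u v t ≤ 2 * max 0 (deriv (u t) (s t) - deriv (v t) (s t)) := by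
  unfold Err
  apply mul_le_mul_of_nonneg_right _ (le_max_left _ _)
  have := (abs_le.1 (gd_abs_le hδ (v t (s t)))).1
  linarith

/-- continuity of the difference of the derivatives along the smaller boundary -/
lemma D_cont (h1 : IsSolOn p s₀ φ T s u) (h2 : IsSolOn p s₀ φ T σ v) {t0 : ℝ}
    (ht0 : t0 ∈ Ioo 0 T) :
    ContinuousAt (fun t => deriv (u t) (min (s t) (σ t)) - deriv (v t) (min (s t) (σ t))) t0 ∧
    ContinuousAt (fun t => v t (min (s t) (σ t))) t0 := by
  have hm0 : t0 ∈ Ioc 0 T := ⟨ht0.1, ht0.2.le⟩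
  obtain ⟨V, hV, hVe⟩ := sol_ext_u h2
  have ht1p : 0 < t0 / 2 := by linarith [ht0.1]
  obtain ⟨P, hP, hPe⟩ := sol_ext_ux h1 ht1p (by linarith [ht0.1, ht0.2])
  obtain ⟨R, hR, hRe⟩ := sol_ext_ux h2 ht1p (by linarith [ht0.1, ht0.2])
  have hsc : ContinuousAt s t0 := (h1.s_diff t0 hm0).continuousAt
  have hσc : ContinuousAt σ t0 := (h2.s_diff t0 hm0).continuousAt
  have hmc := hsc.min hσc
  have hnb : Ioo (t0 / 2) T ∈ 𝓝 t0 := Ioo_mem_nhds (by linarith [ht0.1]) ht0.2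
  have cmp : ∀ {W : ℝ → ℝ → ℝ}, Continuous (Function.uncurry W) →
      ContinuousAt (fun t => W t (min (s t) (σ t))) t0 := fun {W} hW =>
    ContinuousAt.comp (f := fun t => ((t, min (s t) (σ t)) : ℝ × ℝ)) (g := Function.uncurry W)
      hW.continuousAt (continuousAt_id.prodMk hmc)
  constructor
  · refine ((cmp hP).sub (cmp hR)).congr ?_
    filter_upwards [hnb] with t ht
    have hmt : t ∈ Icc 0 T := ⟨by linarith [ht.1], ht.2.le⟩
    have h3 := le_min (h1.s_pos t hmt).le (h2.s_pos t hmt).le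
    show P t (min (s t) (σ t)) - R t (min (s t) (σ t)) = _
    rw [hPe t ⟨ht.1.le, ht.2.le⟩ _ ⟨h3, min_le_left _ _⟩,
      hRe t ⟨ht.1.le, ht.2.le⟩ _ ⟨h3, min_le_right _ _⟩]
  · refine (cmp hV).congr ?_
    filter_upwards [hnb] with t ht
    have hmt : t ∈ Icc 0 T := ⟨by linarith [ht.1], ht.2.le⟩
    have h3 := le_min (h1.s_pos t hmt).le (h2.s_pos t hmt).le
    rw [hVe t hmt _ ⟨h3, min_le_right _ _⟩]

lemma caseA (h1 : IsSolOn p s₀ φ T s u) (h2 : IsSolOn p s₀ φ T σ v) {t0 ε : ℝ}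
    (ht0 : t0 ∈ Ioo 0 T) (hlt : s t0 < σ t0) (hε : 0 < ε) :
    ∃ δ0 > 0, ∀ᶠ t in 𝓝[<] t0, s t < σ t ∧ ∀ δ ∈ Ioo 0 δ0, Err δ s u v t ≤ ε := by
  have hm0 : t0 ∈ Ioc 0 T := ⟨ht0.1, ht0.2.le⟩
  have hm0' : t0 ∈ Icc 0 T := ⟨ht0.1.le, ht0.2.le⟩
  have hsc : ContinuousAt s t0 := (h1.s_diff t0 hm0).continuousAt
  have hσc : ContinuousAt σ t0 := (h2.s_diff t0 hm0).continuousAt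
  have hev : ∀ᶠ t in 𝓝 t0, s t < σ t := hsc.eventually_lt hσc hlt
  obtain ⟨d1, d2⟩ := D_cont h1 h2 ht0
  have d1' : ContinuousAt (fun t => deriv (u t) (s t) - deriv (v t) (s t)) t0 := by
    refine d1.congr ?_
    filter_upwards [hev] with t ht
    rw [min_eq_left ht.le]
  have d2' : ContinuousAt (fun t => v t (s t)) t0 := by
    refine d2.congr ?_
    filter_upwards [hev] with t ht
    rw [min_eq_left ht.le]
  have hsp := h1.s_pos t0 hm0'
  have hvn := h2.u_nonneg t0 hm0' (s t0) ⟨hsp.le, hlt.le⟩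
  rcases hvn.eq_or_lt with h0 | hpos
  · have hmin : IsLocalMin (v t0) (s t0) := by
      filter_upwards [Ioo_mem_nhds hsp hlt] with x hx
      rw [← h0]
      exact h2.u_nonneg t0 hm0' x ⟨hx.1.le, hx.2.le⟩
    have hz := hmin.deriv_eq_zero
    have hu := sol_ux_nonpos h1 hm0
    refine ⟨1, one_pos, nhdsWithin_le_nhds ?_⟩
    have : ∀ᶠ t in 𝓝 t0, deriv (u t) (s t) - deriv (v t) (s t) < ε / 2 :=
      d1'.eventually (gt_mem_nhds (by
        show deriv (u t0) (s t0) - deriv (v t0) (s t0) < ε / 2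
        rw [hz]; linarith))
    filter_upwards [hev, this] with t ht h
    refine ⟨ht, fun δ hδ => (Err_le hδ.1).trans ?_⟩
    have : max 0 (deriv (u t) (s t) - deriv (v t) (s t)) ≤ ε / 2 := max_le (by linarith) h.le
    linarith
  · set c := v t0 (s t0) with hc
    set B := |deriv (u t0) (s t0) - deriv (v t0) (s t0)| + 1 with hB
    have hBp : 0 < B := by positivity
    refine ⟨ε * (c / 2) / B, by positivity, nhdsWithin_le_nhds ?_⟩
    have e1 : ∀ᶠ t in 𝓝 t0, deriv (u t) (s t) - deriv (v t) (s t) < B :=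
      d1'.eventually (gt_mem_nhds (by
        have := le_abs_self (deriv (u t0) (s t0) - deriv (v t0) (s t0)); linarith))
    have e2 : ∀ᶠ t in 𝓝 t0, c / 2 < v t (s t) :=
      d2'.eventually (lt_mem_nhds (by show c / 2 < v t0 (s t0); linarith))
    filter_upwards [hev, e1, e2] with t ht k1 k2
    refine ⟨ht, fun δ hδ => ?_⟩
    have k3 := one_sub_gd_le hδ.1 (half_pos hpos) k2.le
    unfold Err
    have k4 : max 0 (deriv (u t) (s t) - deriv (v t) (s t)) ≤ B := max_le hBp.le k1.le
    calc _ ≤ δ / (c / 2) * B := mul_le_mul k3 k4 (le_max_left _ _) (div_nonneg hδ.1.le (by linarith))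
      _ ≤ ε := by
        have := hδ.2
        rw [lt_div_iff₀ hBp] at this
        rw [div_mul_eq_mul_div, div_le_iff₀ (by linarith)]
        exact this.le

lemma claimA (h1 : IsSolOn p s₀ φ T s u) (h2 : IsSolOn p s₀ φ T σ v) {A ε t0 : ℝ}
    (hA : 0 ≤ A) (ht0 : t0 ∈ Ioo 0 T) (hε : 0 < ε)
    (hbd : ∀ t ∈ Ioc 0 T, |u t 0 ^ p - v t 0 ^ p| ≤ A * |u t 0 - v t 0|)
    (hne : s t0 ≠ σ t0) :
    ∀ᶠ t in 𝓝[<] t0, Fd A 0 s u σ v t0 - Fd A 0 s u σ v t ≤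
      (A ^ 2 * Fd A 0 s u σ v t0 + ε) * (t0 - t) := by
  rcases lt_or_gt_of_ne hne with hlt | hlt
  · obtain ⟨δ0, hδ0, he⟩ := caseA h1 h2 ht0 hlt (half_pos hε)
    refine fromErr h1 h2 hA hδ0 ht0 hε hbd ?_
    filter_upwards [he] with t ht δ hδ
    exact ⟨fun _ => ht.2 δ hδ, fun h => absurd ht.1 (not_lt.2 h)⟩
  · obtain ⟨δ0, hδ0, he⟩ := caseA h2 h1 ht0 hlt (half_pos hε)
    refine fromErr h1 h2 hA hδ0 ht0 hε hbd ?_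
    filter_upwards [he] with t ht δ hδ
    exact ⟨fun h => absurd ht.1 (not_lt.2 h), fun _ => ht.2 δ hδ⟩

lemma claimP (h1 : IsSolOn p s₀ φ T s u) (h2 : IsSolOn p s₀ φ T σ v) {A ε t0 : ℝ}
    (hA : 0 ≤ A) (ht0 : t0 ∈ Ioo 0 T) (hε : 0 < ε)
    (hbd : ∀ t ∈ Ioc 0 T, |u t 0 ^ p - v t 0 ^ p| ≤ A * |u t 0 - v t 0|) :
    ∀ᶠ t in 𝓝[<] t0, Fd A 0 s u σ v t0 - Fd A 0 s u σ v t ≤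
      (A ^ 2 * Fd A 0 s u σ v t0 + ε) * (t0 - t) := by
  have hm0 : t0 ∈ Ioc 0 T := ⟨ht0.1, ht0.2.le⟩
  by_cases hne : s t0 = σ t0
  swap
  · exact claimA h1 h2 hA ht0 hε hbd hne
  by_cases hd : deriv s t0 = deriv σ t0
  · obtain ⟨d1, -⟩ := D_cont h1 h2 ht0
    have hz : deriv (u t0) (min (s t0) (σ t0)) - deriv (v t0) (min (s t0) (σ t0)) = 0 := by
      have e1 := h1.stefan t0 hm0
      have e2 := h2.stefan t0 hm0
      rw [← hne, min_self]
      rw [← hne] at e2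
      linarith
    have hev : ∀ᶠ t in 𝓝 t0,
        |deriv (u t) (min (s t) (σ t)) - deriv (v t) (min (s t) (σ t))| < ε / 4 :=
      d1.abs.eventually (gt_mem_nhds (by
        show |deriv (u t0) (min (s t0) (σ t0)) - deriv (v t0) (min (s t0) (σ t0))| < ε / 4
        rw [hz, abs_zero]; linarith))
    refine fromErr h1 h2 hA one_pos ht0 hε hbd ?_
    filter_upwards [nhdsWithin_le_nhds hev] with t ht δ hδ
    constructor
    · intro hle
      rw [min_eq_left hle, abs_lt] at ht
      have := Err_le (s := s) (u := u) (v := v) (t := t) hδ.1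
      have : max 0 (deriv (u t) (s t) - deriv (v t) (s t)) ≤ ε / 4 :=
        max_le (by linarith) (by linarith [ht.2])
      linarith
    · intro hle
      rw [min_eq_right hle, abs_lt] at ht
      have := Err_le (s := σ) (u := v) (v := u) (t := t) hδ.1
      have : max 0 (deriv (v t) (σ t) - deriv (u t) (σ t)) ≤ ε / 4 :=
        max_le (by linarith) (by linarith [ht.1])
      linarith
  · have hsne : ∀ᶠ t in 𝓝[<] t0, s t ≠ σ t := by
      have hD : HasDerivAt (fun t => s t - σ t) (deriv s t0 - deriv σ t0) t0 :=
        (h1.s_diff t0 hm0).hasDerivAt.sub (h2.s_diff t0 hm0).hasDerivAt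
      have := hD.eventually_ne (c := 0) (sub_ne_zero.2 hd)
      have h' : ∀ᶠ t in 𝓝[<] t0, s t - σ t ≠ 0 :=
        nhdsWithin_mono t0 (fun x hx => ne_of_lt hx : Iio t0 ⊆ {t0}ᶜ) this
      filter_upwards [h'] with t ht using sub_ne_zero.1 ht
    have hc : ContinuousAt (Fd A 0 s u σ v) t0 :=
      (Fd_contOn h1 h2 A 0).continuousAt (Icc_mem_nhds ht0.1 ht0.2)
    have hMe : ∀ᶠ t in 𝓝[<] t0, Fd A 0 s u σ v t < Fd A 0 s u σ v t0 + ε / (2 * (A ^ 2 + 1)) :=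
      nhdsWithin_le_nhds (hc.eventually (gt_mem_nhds (lt_add_of_pos_right _ (by positivity))))
    obtain ⟨l, hl, hl'⟩ := (mem_nhdsLT_iff_exists_Ioo_subset).1
      ((hsne.and hMe).and (Ioo_mem_nhdsLT ht0.1))
    filter_upwards [Ioo_mem_nhdsLT hl] with t ht
    have htp := (hl' ht).2
    refine dini_le ht.2 ((Fd_contOn h1 h2 A 0).mono (Icc_subset_Icc htp.1.le ht0.2.le)) ?_
    intro r hr c' hc'
    have hr' := hl' (show r ∈ Ioo l t0 from ⟨ht.1.trans hr.1, hr.2⟩)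
    have hcl := claimA h1 h2 hA (show r ∈ Ioo 0 T from ⟨hr'.2.1, hr'.2.2.trans ht0.2⟩)
      (half_pos hε) hbd hr'.1.1
    apply Eventually.frequently
    filter_upwards [hcl, self_mem_nhdsWithin] with r' h' hlt
    refine h'.trans (mul_le_mul_of_nonneg_right ?_ (sub_pos.2 hlt).le)
    have : A ^ 2 * (ε / (2 * (A ^ 2 + 1))) ≤ ε / 2 := by
      rw [← mul_div_assoc, div_le_div_iff₀ (by positivity) (by norm_num)]
      nlinarith [sq_nonneg A]
    have := mul_le_mul_of_nonneg_left hr'.1.2.le (sq_nonneg A)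
    linarith

/-- the functional at level zero, for ordered boundaries -/
lemma F0_facts (h1 : IsSolOn p s₀ φ T s u) (h2 : IsSolOn p s₀ φ T σ v) {A t : ℝ}
    (ht : t ∈ Icc 0 T) (hle : s t ≤ σ t) :
    0 ≤ Fd A 0 s u σ v t ∧ (Fd A 0 s u σ v t = 0 → s t = σ t ∧ ∀ x ∈ Icc 0 (s t), u t x = v t x) ∧
    (s t = σ t → (∀ x ∈ Icc 0 (s t), u t x = v t x) → Fd A 0 s u σ v t = 0) := by
  obtain ⟨U, hU, hUe⟩ := sol_ext_u h1
  obtain ⟨V, hV, hVe⟩ := sol_ext_u h2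
  have hs := h1.s_pos t ht
  have hσ := h2.s_pos t ht
  have hUt := sec_cont hU t
  have hVt := sec_cont hV t
  have cJ : Continuous fun x => |U t x - V t x| * Real.exp (-A * x) := by fun_prop
  have cV : Continuous fun x => (1 + V t x) * Real.exp (-A * x) := by fun_prop
  have e : Fd A 0 s u σ v t = (∫ x in (0:ℝ)..(s t), |U t x - V t x| * Real.exp (-A * x)) +
      ∫ x in (s t)..(σ t), (1 + V t x) * Real.exp (-A * x) := by
    rw [Fd_eq_ext hs.le hσ.le (hUe t ht) (hVe t ht), Fd_eq_le hle hUt hVt,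
      ← intervalIntegral.integral_add_adjacent_intervals (cV.intervalIntegrable 0 (s t))
      (cV.intervalIntegrable (s t) (σ t)), ← add_assoc, ← intervalIntegral.integral_add]
    · congr 2; ext x; rw [Jd_zero]; ring
    · have := (Jd_cont 0).comp (hUt.sub hVt)
      have : Continuous fun x => Jd 0 (U t x - V t x) := this
      exact Continuous.intervalIntegrable (by fun_prop) _ _
    · exact cV.intervalIntegrable _ _
  have p1 : 0 ≤ ∫ x in (0:ℝ)..(s t), |U t x - V t x| * Real.exp (-A * x) :=
    intervalIntegral.integral_nonneg hs.le fun x _ => by positivity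
  have p2' : ∀ x ∈ Icc (s t) (σ t), 0 < (1 + V t x) * Real.exp (-A * x) := by
    intro x hx
    have hx' : x ∈ Icc 0 (σ t) := ⟨hs.le.trans hx.1, hx.2⟩
    have := h2.u_nonneg t ht x hx'
    rw [hVe t ht x hx']
    positivity
  have p2 : 0 ≤ ∫ x in (s t)..(σ t), (1 + V t x) * Real.exp (-A * x) :=
    intervalIntegral.integral_nonneg hle fun x hx => (p2' x hx).le
  refine ⟨by rw [e]; positivity, fun h0 => ?_, fun heq hx => ?_⟩
  · have z1 : (∫ x in (0:ℝ)..(s t), |U t x - V t x| * Real.exp (-A * x)) = 0 := by linarith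
    have z2 : (∫ x in (s t)..(σ t), (1 + V t x) * Real.exp (-A * x)) = 0 := by linarith
    constructor
    · by_contra hne
      have hlt := lt_of_le_of_ne hle hne
      have := intervalIntegral.intervalIntegral_pos_of_pos_on (cV.intervalIntegrable (s t) (σ t))
        (fun x hx => p2' x (Ioo_subset_Icc_self hx)) hlt
      linarith
    · intro x hx
      by_contra hne
      have hne' : U t x - V t x ≠ 0 := by
        rw [hUe t ht x hx, hVe t ht x ⟨hx.1, hx.2.trans hle⟩]
        exact sub_ne_zero.2 hne
      have := intervalIntegral.integral_pos hs cJ.continuousOn (fun x _ => by positivity)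
        ⟨x, hx, by positivity⟩
      linarith
  · rw [e, ← heq, intervalIntegral.integral_same, add_zero]
    rw [intervalIntegral.integral_congr (g := fun _ => (0:ℝ))]
    · simp
    · intro x hxx
      rw [uIcc_of_le hs.le] at hxx
      simp only
      rw [hUe t ht x hxx, hVe t ht x (by rw [← heq]; exact hxx), hx x hxx]
      simp

lemma bd_exists (hp : 1 < p) (h1 : IsSolOn p s₀ φ T s u) (h2 : IsSolOn p s₀ φ T σ v) :
    ∃ A, 0 ≤ A ∧ ∀ t ∈ Ioc 0 T, |u t 0 ^ p - v t 0 ^ p| ≤ A * |u t 0 - v t 0| := by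
  obtain ⟨U, hU, hUe⟩ := sol_ext_u h1
  obtain ⟨V, hV, hVe⟩ := sol_ext_u h2
  have sec2 : ∀ {W : ℝ → ℝ → ℝ}, Continuous (Function.uncurry W) → ∀ x, Continuous fun t => W t x :=
    fun hW t => hW.comp (Continuous.prodMk continuous_id continuous_const)
  obtain ⟨B1, hB1⟩ := (isCompact_Icc (a := (0:ℝ)) (b := T)).bddAbove_image
    (sec2 hU 0).continuousOn
  obtain ⟨B2, hB2⟩ := (isCompact_Icc (a := (0:ℝ)) (b := T)).bddAbove_image
    (sec2 hV 0).continuousOn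
  set B := max 0 (max B1 B2) with hB
  have hB0 : 0 ≤ B := le_max_left _ _
  refine ⟨p * B ^ (p - 1), by have := Real.rpow_nonneg hB0 (p - 1); nlinarith, fun t ht => ?_⟩
  have htm : t ∈ Icc 0 T := ⟨ht.1.le, ht.2⟩
  have zs : (0:ℝ) ∈ Icc 0 (s t) := ⟨le_rfl, (h1.s_pos t htm).le⟩
  have zσ : (0:ℝ) ∈ Icc 0 (σ t) := ⟨le_rfl, (h2.s_pos t htm).le⟩
  have hu : u t 0 ∈ Icc 0 B := by
    refine ⟨h1.u_nonneg t htm 0 zs, ?_⟩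
    rw [← hUe t htm 0 zs]
    exact (hB1 (mem_image_of_mem _ htm)).trans ((le_max_left _ _).trans (le_max_right _ _))
  have hv : v t 0 ∈ Icc 0 B := by
    refine ⟨h2.u_nonneg t htm 0 zσ, ?_⟩
    rw [← hVe t htm 0 zσ]
    exact (hB2 (mem_image_of_mem _ htm)).trans ((le_max_right _ _).trans (le_max_right _ _))
  have := (convex_Icc 0 B).norm_image_sub_le_of_norm_hasDerivWithin_le
    (f := fun x : ℝ => x ^ p) (f' := fun x : ℝ => p * x ^ (p - 1)) (C := p * B ^ (p - 1))
    (fun x _ => (Real.hasDerivAt_rpow_const (Or.inr hp.le)).hasDerivWithinAt)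
    (fun x hx => by
      have h3 := Real.rpow_nonneg hx.1 (p - 1)
      rw [Real.norm_of_nonneg (by nlinarith)]
      have := Real.rpow_le_rpow hx.1 hx.2 (by linarith : 0 ≤ p - 1)
      nlinarith) hv hu
  simpa [Real.norm_eq_abs] using this

lemma uniq_main (hp : 1 < p) (h1 : IsSolOn p s₀ φ T s u) (h2 : IsSolOn p s₀ φ T σ v) :
    ∀ t ∈ Icc 0 T, s t = σ t ∧ ∀ x ∈ Icc 0 (s t), u t x = v t x := by
  obtain ⟨A, hA, hbd⟩ := bd_exists hp h1 h2
  have h00 : (0:ℝ) ∈ Icc 0 T := ⟨le_rfl, h1.T_pos.le⟩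
  have e0 : s 0 = σ 0 := by rw [h1.init_s, h2.init_s]
  have hF := dini_gronwall (sq_nonneg A) (Fd_contOn h1 h2 A 0)
    ((F0_facts h1 h2 h00 e0.le).2.2 e0 (by
      intro x hx
      rw [h1.init_s] at hx
      rw [h1.init x hx, h2.init x hx]))
    (fun t ht => by
      rcases le_total (s t) (σ t) with h | h
      · exact (F0_facts h1 h2 ht h).1
      · rw [Fd_symm]; exact (F0_facts h2 h1 ht h).1)
    (fun t ht ε hε => (claimP h1 h2 hA ht hε hbd).frequently)
  intro t ht
  rcases le_total (s t) (σ t) with h | h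
  · exact (F0_facts h1 h2 ht h).2.1 (hF t ht)
  · have := hF t ht
    rw [Fd_symm] at this
    obtain ⟨a, b⟩ := (F0_facts h2 h1 ht h).2.1 this
    exact ⟨a.symm, fun x hx => (b x (by rw [a]; exact hx)).symm⟩

end fin

/-- Proposition 2.3: uniqueness of solutions of problem (P) on `(0,T]`. -/
theorem stmt_8 (p : ℝ) (hp : 1 < p) (T : ℝ) (hT : 0 < T) (s₀ : ℝ) (φ : ℝ → ℝ)
    (hW : memW s₀ φ) (s σ : ℝ → ℝ) (u v : ℝ → ℝ → ℝ)
    (h1 : IsSolOn p s₀ φ T s u) (h2 : IsSolOn p s₀ φ T σ v) :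
    (∀ t ∈ Icc 0 T, s t = σ t) ∧
    ∀ t ∈ Icc 0 T, ∀ x ∈ Icc 0 (s t), u t x = v t x := by
  have h := uniq_main hp h1 h2
  exact ⟨fun t ht => (h t ht).1, fun t ht => (h t ht).2⟩
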